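/- arXiv:2106.03227 — 2 statements merged into one kernel-verified Lean document; each statement's English description precedes it below -/
import Mathlib

section
/- (Theorem 3.1, Type-I error part.) Assume the null hypothesis p = q. Let α_level ∈ (0,1), define λ₁ = √(8 log(4/α_level)) and the threshold t_thres = 4/(c n) + 4 λ₁ √(ν/(c n)). If n > λ₁²/(9 ν c), then the probability (under the product law p^{⊗n_X} ⊗ q^{⊗n_Y}) that T̂ > t_thres is at most α_level. -/
open MeasureTheory Real
open scoped BigOperators ENNReal

/-- The biased empirical squared MMD statistic `T̂` of kernel `K` on samples
`ω = (X, Y)` with `n_X` and `n_Y` points. -/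
noncomputable def mmdStat {𝒳 : Type*} (K : 𝒳 → 𝒳 → ℝ) (nX nY : ℕ)
    (ω : (Fin nX → 𝒳) × (Fin nY → 𝒳)) : ℝ :=
  (1/(nX:ℝ)^2) * ∑ i, ∑ j, K (ω.1 i) (ω.1 j)
  + (1/(nY:ℝ)^2) * ∑ i, ∑ j, K (ω.2 i) (ω.2 j)
  - (2/((nX:ℝ)*(nY:ℝ))) * ∑ i, ∑ j, K (ω.1 i) (ω.2 j)

/-!
Pool the two samples into `z` with weights `a = 1 / n_X` on the first and `a = -1 / n_Y` on the
second. If `φ` is a feature map of `K`, then `T̂ = ‖∑ i, a i • φ (z i)‖ ^ 2`. Under the null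
hypothesis the `z i` are i.i.d., and since `∑ i, a i = 0` only the diagonal and a single multiple of
`∬ K` survive in the mean, so `E T̂ ≤ 2 A` with `A = ∑ i, a i ^ 2 = 1 / n_X + 1 / n_Y`. The norm
`√T̂` has bounded differences `2 |a i|`, so by McDiarmid's inequality it is sub-Gaussian with
variance proxy `A` around its mean, which is at most `√(2 A)` by Jensen. Hence `T̂ ≤ 4 A (1 + L)`
outside an event of probability `exp (-L)`. Take `L = log (1 / α)`; the lower bound on `n` says
exactly that the term `4 λ₁ √(ν / (c n))` of the threshold dominates `4 λ₁ ^ 2 / (3 c n)`, which is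
enough to absorb `L`.
-/

open ProbabilityTheory
open scoped NNReal

section Oscillation

lemma mem_Icc_iInf_of_abs_sub_le {Ω : Type*} {f : Ω → ℝ} {c : ℝ}
    (hosc : ∀ x y, |f x - f y| ≤ c) (x : Ω) : f x ∈ Set.Icc (⨅ y, f y) ((⨅ y, f y) + c) := by
  have : Nonempty Ω := ⟨x⟩
  have sub_le (y : Ω) : f x - c ≤ f y := by linarith [(abs_le.mp (hosc x y)).2]
  exact ⟨ciInf_le ⟨f x - c, Set.forall_mem_range.mpr sub_le⟩ x,
    sub_le_iff_le_add.mp (le_ciInf sub_le)⟩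

variable {Ω : Type*} [MeasurableSpace Ω] {μ : Measure Ω} {f : Ω → ℝ} {c : ℝ}

lemma integrable_of_abs_sub_le [IsFiniteMeasure μ] (hf : AEMeasurable f μ)
    (hosc : ∀ x y, |f x - f y| ≤ c) : Integrable f μ :=
  .of_mem_Icc _ _ hf (.of_forall (mem_Icc_iInf_of_abs_sub_le hosc))

lemma hasSubgaussianMGF_of_abs_sub_le [IsProbabilityMeasure μ] {c : ℝ≥0} (hf : AEMeasurable f μ)
    (hosc : ∀ x y, |f x - f y| ≤ c) :
    HasSubgaussianMGF (fun x ↦ f x - ∫ y, f y ∂μ) ((c / 2) ^ 2) μ := by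
  simpa using hasSubgaussianMGF_of_mem_Icc hf (.of_forall (mem_Icc_iInf_of_abs_sub_le hosc))

lemma abs_sub_integral_le_of_abs_sub_le [IsProbabilityMeasure μ] (hf : AEMeasurable f μ)
    (hosc : ∀ x y, |f x - f y| ≤ c) (x : Ω) : |f x - ∫ y, f y ∂μ| ≤ c := by
  have hfi := integrable_of_abs_sub_le hf hosc
  calc |f x - ∫ y, f y ∂μ|
      = ‖∫ y, (f x - f y) ∂μ‖ := by simp [integral_sub (integrable_const _) hfi]
    _ ≤ c := by
        simpa using norm_integral_le_of_norm_le_const (μ := μ) (f := fun y ↦ f x - f y)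
          (.of_forall (hosc x))

end Oscillation

section Prod

variable {X Y : Type*} [MeasurableSpace X] [MeasurableSpace Y] {μ : Measure X} {ν : Measure Y}
  [IsProbabilityMeasure μ] [SFinite ν] {f : X × Y → ℝ} {c v : ℝ≥0}

lemma integrable_exp_mul_prod (hf : Measurable f)
    (hosc : ∀ x x' y, |f (x, y) - f (x', y)| ≤ c)
    (hmarg : HasSubgaussianMGF (fun y ↦ ∫ x, f (x, y) ∂μ) v ν) (t : ℝ) :
    Integrable (fun u ↦ exp (t * f u)) (μ.prod ν) := by
  have hdev (u : X × Y) : |f u - ∫ x, f (x, u.2) ∂μ| ≤ c :=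
    abs_sub_integral_le_of_abs_sub_le (f := fun x ↦ f (x, u.2)) (by fun_prop)
      (fun x x' ↦ hosc x x' u.2) u.1
  have hmarg_meas : Measurable fun u : X × Y ↦ ∫ x, f (x, u.2) ∂μ :=
    hf.stronglyMeasurable.integral_prod_left'.measurable.comp measurable_snd
  have hsplit : (fun u : X × Y ↦ exp (t * f u)) = fun u ↦
      exp (t * (f u - ∫ x, f (x, u.2) ∂μ)) * exp (t * ∫ x, f (x, u.2) ∂μ) := by
    ext u
    rw [← exp_add, ← mul_add, sub_add_cancel]
  rw [hsplit]
  refine ((hmarg.integrable_exp_mul t).comp_snd μ).bdd_mul (c := exp (|t| * c))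
    (by fun_prop : Measurable _).aestronglyMeasurable (.of_forall fun u ↦ ?_)
  rw [norm_eq_abs, abs_exp, exp_le_exp]
  calc t * (f u - ∫ x, f (x, u.2) ∂μ) ≤ |t| * |f u - ∫ x, f (x, u.2) ∂μ| := by
        rw [← abs_mul]; exact le_abs_self _
    _ ≤ |t| * c := by gcongr; exact hdev u

lemma hasSubgaussianMGF_prod_of_abs_sub_le (hf : Measurable f)
    (hosc : ∀ x x' y, |f (x, y) - f (x', y)| ≤ c)
    (hmarg : HasSubgaussianMGF (fun y ↦ ∫ x, f (x, y) ∂μ) v ν) :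
    HasSubgaussianMGF f ((c / 2) ^ 2 + v) (μ.prod ν) where
  integrable_exp_mul := integrable_exp_mul_prod hf hosc hmarg
  mgf_le t := by
    have hint := integrable_exp_mul_prod hf hosc hmarg t
    have hsection (y : Y) : ∫ x, exp (t * f (x, y)) ∂μ ≤
        exp (((c / 2) ^ 2 : ℝ≥0) * t ^ 2 / 2) * exp (t * ∫ x, f (x, y) ∂μ) := by
      have hcentered := (hasSubgaussianMGF_of_abs_sub_le (μ := μ) (f := fun x ↦ f (x, y))
        (by fun_prop) (fun x x' ↦ hosc x x' y)).mgf_le t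
      calc ∫ x, exp (t * f (x, y)) ∂μ
          = (∫ x, exp (t * (f (x, y) - ∫ x', f (x', y) ∂μ)) ∂μ) *
              exp (t * ∫ x, f (x, y) ∂μ) := by
            rw [← integral_mul_const]
            simp_rw [← exp_add, ← mul_add, sub_add_cancel]
        _ ≤ _ := by gcongr; exact hcentered
    calc mgf f (μ.prod ν) t = ∫ y, ∫ x, exp (t * f (x, y)) ∂μ ∂ν := integral_prod_symm _ hint
      _ ≤ ∫ y, exp (((c / 2) ^ 2 : ℝ≥0) * t ^ 2 / 2) * exp (t * ∫ x, f (x, y) ∂μ) ∂ν :=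
          integral_mono hint.integral_prod_right ((hmarg.integrable_exp_mul t).const_mul _) hsection
      _ ≤ exp (((c / 2) ^ 2 : ℝ≥0) * t ^ 2 / 2) * exp (v * t ^ 2 / 2) := by
          rw [integral_const_mul]
          gcongr
          exact hmarg.mgf_le t
      _ = exp (((c / 2) ^ 2 + v : ℝ≥0) * t ^ 2 / 2) := by
          rw [← exp_add, NNReal.coe_add]
          ring_nf

end Prod

lemma hasSubgaussianMGF_comp_iff {Ω Ω' : Type*} [MeasurableSpace Ω] [MeasurableSpace Ω']
    {μ : Measure Ω} {ν : Measure Ω'} {g : Ω → Ω'} {f : Ω' → ℝ} {v : ℝ≥0}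
    (hg : MeasurePreserving g μ ν) (hf : Measurable f) :
    HasSubgaussianMGF (f ∘ g) v μ ↔ HasSubgaussianMGF f v ν := by
  have hident : IdentDistrib (f ∘ g) f μ ν :=
    ⟨(hf.comp hg.measurable).aemeasurable, hf.aemeasurable, by
      rw [← Measure.map_map hf hg.measurable, hg.map_eq]⟩
  exact ⟨(·.congr_identDistrib hident), (·.congr_identDistrib hident.symm)⟩

lemma integral_comp_of_measurePreserving {Ω Ω' G : Type*} [MeasurableSpace Ω]
    [MeasurableSpace Ω'] [NormedAddCommGroup G] [NormedSpace ℝ G] {μ : Measure Ω} {ν : Measure Ω'}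
    {g : Ω → Ω'} {f : Ω' → G} (hg : MeasurePreserving g μ ν) (hf : AEStronglyMeasurable f ν) :
    ∫ x, f (g x) ∂μ = ∫ y, f y ∂ν := by
  rw [← hg.map_eq] at hf ⊢
  exact (integral_map hg.aemeasurable hf).symm

section FinCons

variable {n : ℕ} {E : Fin (n + 1) → Type*} [∀ i, MeasurableSpace (E i)]

lemma finCons_eq_piFinSuccAbove_symm :
    (fun u : E 0 × (∀ i : Fin n, E i.succ) ↦ (Fin.cons u.1 u.2 : ∀ i, E i)) =
      (MeasurableEquiv.piFinSuccAbove E 0).symm := by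
  ext u i
  refine i.cases ?_ fun _ ↦ ?_ <;> rfl

lemma measurable_finCons :
    Measurable fun u : E 0 × (∀ i : Fin n, E i.succ) ↦ (Fin.cons u.1 u.2 : ∀ i, E i) := by
  rw [finCons_eq_piFinSuccAbove_symm]
  exact MeasurableEquiv.measurable _

lemma measurePreserving_finCons (μ : ∀ i, Measure (E i)) [∀ i, SigmaFinite (μ i)] :
    MeasurePreserving (fun u : E 0 × (∀ i : Fin n, E i.succ) ↦ (Fin.cons u.1 u.2 : ∀ i, E i))
      ((μ 0).prod (Measure.pi fun i ↦ μ i.succ)) (Measure.pi μ) := by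
  rw [finCons_eq_piFinSuccAbove_symm]
  exact (measurePreserving_piFinSuccAbove μ 0).symm

end FinCons

/-- `f` changes by at most `c i` when only the `i`-th coordinate of its argument is changed: the
hypothesis of McDiarmid's inequality. -/
def HasBoundedDifferences {ι : Type*} [DecidableEq ι] {E : ι → Type*} (f : (∀ i, E i) → ℝ)
    (c : ι → ℝ≥0) : Prop :=
  ∀ i z x, |f (Function.update z i x) - f z| ≤ c i

namespace HasBoundedDifferences

section Basic

variable {ι : Type*} [DecidableEq ι] {E : ι → Type*} {f : (∀ i, E i) → ℝ} {c : ι → ℝ≥0}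

lemma abs_sub_le_sum [Fintype ι] (hfc : HasBoundedDifferences f c) (w z : ∀ i, E i) :
    |f w - f z| ≤ ∑ i, (c i : ℝ) := by
  have partial_le (s : Finset ι) : |f (s.piecewise w z) - f z| ≤ ∑ i ∈ s, (c i : ℝ) := by
    induction s using Finset.induction_on with
    | empty => simp
    | insert i s his ih =>
      rw [Finset.piecewise_insert, Finset.sum_insert his]
      exact (abs_sub_le _ _ _).trans (add_le_add (hfc i _ _) ih)
  simpa using partial_le Finset.univ

lemma integrable [Finite ι] [∀ i, MeasurableSpace (E i)] {μ : Measure (∀ i, E i)}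
    [IsFiniteMeasure μ] (hfc : HasBoundedDifferences f c) (hf : AEMeasurable f μ) :
    Integrable f μ := by
  have := Fintype.ofFinite ι
  exact integrable_of_abs_sub_le hf hfc.abs_sub_le_sum

lemma sub_const (hfc : HasBoundedDifferences f c) (a : ℝ) :
    HasBoundedDifferences (fun z ↦ f z - a) c := fun i z x ↦ by
  simpa using hfc i z x

lemma comp_piCongrLeft {κ : Type*} [DecidableEq κ] (e : κ ≃ ι) (hfc : HasBoundedDifferences f c) :
    HasBoundedDifferences (f ∘ Equiv.piCongrLeft E e) (c ∘ e) := fun k z x ↦ by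
  have hupdate : Equiv.piCongrLeft E e (Function.update z k x) =
      Function.update (Equiv.piCongrLeft E e z) (e k) x := by
    ext i
    obtain ⟨l, rfl⟩ := e.surjective i
    rcases eq_or_ne l k with rfl | hlk
    · simp
    · simp [Function.update_of_ne hlk, Function.update_of_ne (e.injective.ne hlk)]
  simpa only [Function.comp_apply, hupdate] using hfc (e k) _ x

end Basic

section Cons

variable {n : ℕ} {E : Fin (n + 1) → Type*} {f : (∀ i, E i) → ℝ} {c : Fin (n + 1) → ℝ≥0}

lemma abs_cons_sub_cons_le (hfc : HasBoundedDifferences f c) (x x' : E 0)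
    (z : ∀ i : Fin n, E i.succ) : |f (Fin.cons x z) - f (Fin.cons x' z)| ≤ c 0 := by
  simpa using hfc 0 (Fin.cons x' z) x

lemma integral_cons [∀ i, MeasurableSpace (E i)] {μ : Measure (E 0)} [IsProbabilityMeasure μ]
    (hfc : HasBoundedDifferences f c) (hf : Measurable f) :
    HasBoundedDifferences (fun z ↦ ∫ x, f (Fin.cons x z) ∂μ) (fun i ↦ c i.succ) := fun i z x ↦ by
  have hint (z : ∀ i : Fin n, E i.succ) : Integrable (fun y ↦ f (Fin.cons y z)) μ :=
    integrable_of_abs_sub_le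
      (hf.comp (measurable_finCons.comp measurable_prodMk_right)).aemeasurable
      (hfc.abs_cons_sub_cons_le · · z)
  have hdiff (y : E 0) :
      ‖f (Fin.cons y (Function.update z i x)) - f (Fin.cons y z)‖ ≤ c i.succ := by
    rw [Fin.cons_update]
    exact hfc i.succ _ x
  rw [← integral_sub (hint _) (hint _)]
  simpa using norm_integral_le_of_norm_le_const (μ := μ) (.of_forall hdiff)

end Cons

lemma hasSubgaussianMGF_fin {n : ℕ} {E : Fin n → Type*} [∀ i, MeasurableSpace (E i)]
    {μ : ∀ i, Measure (E i)} [∀ i, IsProbabilityMeasure (μ i)] {f : (∀ i, E i) → ℝ}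
    {c : Fin n → ℝ≥0} (hfc : HasBoundedDifferences f c) (hf : Measurable f)
    (hmean : ∫ z, f z ∂Measure.pi μ = 0) :
    HasSubgaussianMGF f (∑ i, (c i / 2) ^ 2) (Measure.pi μ) := by
  induction n with
  | zero =>
    have hf0 : f = 0 := by
      ext z
      simpa [Measure.pi_of_empty, Subsingleton.elim _ z] using hmean
    simp [hf0]
  | succ n ih =>
    have hcons := measurePreserving_finCons μ
    have hfcons : Measurable fun u : E 0 × (∀ i : Fin n, E i.succ) ↦ f (Fin.cons u.1 u.2) :=
      hf.comp measurable_finCons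
    have hmarg : Measurable fun z ↦ ∫ x, f (Fin.cons x z) ∂μ 0 :=
      hfcons.stronglyMeasurable.integral_prod_left'.measurable
    have hmarg_mean : ∫ z, ∫ x, f (Fin.cons x z) ∂μ 0 ∂Measure.pi (fun i ↦ μ i.succ) = 0 := by
      rw [← integral_prod_symm (fun u : E 0 × (∀ i : Fin n, E i.succ) ↦ f (Fin.cons u.1 u.2))
        (hcons.integrable_comp_of_integrable (hfc.integrable hf.aemeasurable)), ← hmean]
      exact integral_comp_of_measurePreserving hcons hf.aestronglyMeasurable
    rw [← hasSubgaussianMGF_comp_iff hcons hf, Fin.sum_univ_succ]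
    exact hasSubgaussianMGF_prod_of_abs_sub_le hfcons hfc.abs_cons_sub_cons_le
      (ih (hfc.integral_cons hf) hmarg hmarg_mean)

theorem hasSubgaussianMGF {ι : Type*} [Fintype ι] [DecidableEq ι] {E : ι → Type*}
    [∀ i, MeasurableSpace (E i)] {μ : ∀ i, Measure (E i)} [∀ i, IsProbabilityMeasure (μ i)]
    {f : (∀ i, E i) → ℝ} {c : ι → ℝ≥0} (hfc : HasBoundedDifferences f c) (hf : Measurable f) :
    HasSubgaussianMGF (fun z ↦ f z - ∫ w, f w ∂Measure.pi μ) (∑ i, (c i / 2) ^ 2)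
      (Measure.pi μ) := by
  let e := (Fintype.equivFin ι).symm
  have he := measurePreserving_piCongrLeft μ e
  have hcentered : Measurable fun z ↦ f z - ∫ w, f w ∂Measure.pi μ := hf.sub_const _
  have hmean : ∫ z, (f z - ∫ w, f w ∂Measure.pi μ) ∂Measure.pi μ = 0 := by
    simp [integral_sub (hfc.integrable hf.aemeasurable) (integrable_const _)]
  rw [← hasSubgaussianMGF_comp_iff he hcentered, ← e.sum_comp]
  refine ((hfc.sub_const _).comp_piCongrLeft e).hasSubgaussianMGF_fin
    (hcentered.comp he.measurable) ?_
  exact (he.integral_comp' fun z ↦ f z - ∫ w, f w ∂Measure.pi μ).trans hmean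

end HasBoundedDifferences

universe u

lemma posSemidef_of_forall_fin_sum_nonneg {E : Type*} {K : E → E → ℝ}
    (hsym : ∀ x y, K x y = K y x)
    (hpsd : ∀ (m : ℕ) (z : Fin m → E) (a : Fin m → ℝ),
      0 ≤ ∑ i, ∑ j, a i * a j * K (z i) (z j)) : (Matrix.of K).PosSemidef := by
  refine ⟨Matrix.IsHermitian.ext fun x y ↦ by simp [hsym x y], fun v ↦ ?_⟩
  let e := v.support.equivFin.symm
  have hsum (g : E → ℝ) : ∑ i, g (e i) = ∑ x ∈ v.support, g x := by
    rw [e.sum_comp fun x ↦ g x, Finset.sum_coe_sort]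
  calc 0 ≤ ∑ i, ∑ j, v (e i) * v (e j) * K (e i) (e j) :=
        hpsd _ (fun i ↦ (e i : E)) fun i ↦ v (e i)
    _ = ∑ x ∈ v.support, ∑ y ∈ v.support, v x * v y * K x y := by
        rw [hsum fun x ↦ ∑ j, v x * v (e j) * K x (e j)]
        exact Finset.sum_congr rfl fun x _ ↦ hsum fun y ↦ v x * v y * K x y
    _ = v.sum fun x vx ↦ v.sum fun y vy ↦ star vx * Matrix.of K x y * vy := by
        simp [Finsupp.sum, mul_right_comm]

theorem exists_feature_map {E : Type u} {K : E → E → ℝ} (hK : (Matrix.of K).PosSemidef) :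
    ∃ (H : Type u) (_ : NormedAddCommGroup H) (_ : InnerProductSpace ℝ H) (φ : E → H),
      ∀ x y, inner ℝ (φ x) (φ y) = K x y := by
  have hsym (x y : E) : K y x = K x y := by simpa using hK.isHermitian.apply x y
  let M : Matrix E E (ℝ →L[ℝ] ℝ) := .of fun x y ↦ K x y • ContinuousLinearMap.id ℝ ℝ
  have hM : M.PosSemidef := by
    refine ((RKHS.posSemidef_tfae (K := M)).out 0 2).mpr (And.intro ?_ fun v ↦ ?_)
    · ext x y
      have hid : star (ContinuousLinearMap.id ℝ ℝ) = ContinuousLinearMap.id ℝ ℝ :=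
        star_one (ℝ →L[ℝ] ℝ)
      simp [M, Matrix.conjTranspose_apply, hsym, hid]
    · refine (hK.2 v).trans_eq ?_
      simp [M, Finsupp.sum, hsym, mul_comm]
  have : Fact M.PosSemidef := ⟨hM⟩
  refine ⟨RKHS.OfKernel M, inferInstance, inferInstance,
    fun x ↦ RKHS.kerFun (RKHS.OfKernel M) x 1, fun x y ↦ ?_⟩
  rw [← RKHS.kernel_inner, RKHS.OfKernel.kernel_ofKernel]
  simp [M, hsym]

/-- The squared norm `‖∑ i, a i • φ (z i)‖ ^ 2` of a weighted empirical embedding, for any feature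
map `φ` of the kernel `K`: a V-statistic of the sample `z` with weights `a`. -/
def weightedVStat {ι E : Type*} [Fintype ι] (K : E → E → ℝ) (a : ι → ℝ) (z : ι → E) : ℝ :=
  ∑ i, ∑ j, a i * a j * K (z i) (z j)

section Norm

variable {ι E : Type*} [Fintype ι] {K : E → E → ℝ}

lemma weightedVStat_eq_norm_sq {H : Type*} [NormedAddCommGroup H] [InnerProductSpace ℝ H]
    {φ : E → H} (hφ : ∀ x y, inner ℝ (φ x) (φ y) = K x y) (a : ι → ℝ) (z : ι → E) :
    weightedVStat K a z = ‖∑ i, a i • φ (z i)‖ ^ 2 := by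
  rw [← real_inner_self_eq_norm_sq, sum_inner]
  simp only [weightedVStat, inner_sum, real_inner_smul_left, real_inner_smul_right, hφ, mul_comm,
    mul_left_comm]

lemma weightedVStat_nonneg (hpsd : (Matrix.of K).PosSemidef) (a : ι → ℝ) (z : ι → E) :
    0 ≤ weightedVStat K a z := by
  obtain ⟨H, _, _, φ, hφ⟩ := exists_feature_map hpsd
  rw [weightedVStat_eq_norm_sq hφ]
  positivity

lemma abs_norm_sum_update_sub_le [DecidableEq ι] {H : Type*} [NormedAddCommGroup H]
    [NormedSpace ℝ H] {φ : E → H} {r : ℝ} (hφ : ∀ x, ‖φ x‖ ≤ r) (a : ι → ℝ) (i : ι)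
    (z : ι → E) (x : E) :
    |‖∑ j, a j • φ (Function.update z i x j)‖ - ‖∑ j, a j • φ (z j)‖| ≤ 2 * r * |a i| := by
  have hsum : ∑ j, a j • φ (Function.update z i x j) - ∑ j, a j • φ (z j) =
      a i • (φ x - φ (z i)) := by
    rw [← Finset.sum_sub_distrib, Finset.sum_eq_single i]
    · simp [smul_sub]
    · intro j _ hji
      simp [hji]
    · simp
  calc _ ≤ ‖a i • (φ x - φ (z i))‖ := hsum ▸ abs_norm_sub_norm_le _ _
    _ ≤ |a i| * (r + r) := by
        rw [norm_smul, norm_eq_abs]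
        gcongr
        exact norm_sub_le_of_le (hφ _) (hφ _)
    _ = 2 * r * |a i| := by ring

lemma hasBoundedDifferences_sqrt_weightedVStat [DecidableEq ι] {κ : ℝ≥0}
    (hpsd : (Matrix.of K).PosSemidef) (hdiag : ∀ x, K x x ≤ κ) (a : ι → ℝ) :
    HasBoundedDifferences (fun z ↦ √(weightedVStat K a z))
      (fun i ↦ 2 * NNReal.sqrt κ * ‖a i‖₊) := fun i z x ↦ by
  obtain ⟨H, _, _, φ, hφ⟩ := exists_feature_map hpsd
  have norm_le (x : E) : ‖φ x‖ ≤ √κ :=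
    le_sqrt_of_sq_le (by rw [← real_inner_self_eq_norm_sq, hφ]; exact hdiag x)
  simp only [weightedVStat_eq_norm_sq hφ, sqrt_sq (norm_nonneg _)]
  simpa using abs_norm_sum_update_sub_le norm_le a i z x

end Norm

section Product

variable {ι : Type*} [Fintype ι] {E : Type*} [MeasurableSpace E] {K : E → E → ℝ}

lemma measurePreserving_eval_pair {E : ι → Type*} [∀ i, MeasurableSpace (E i)]
    (μ : ∀ i, Measure (E i)) [∀ i, IsProbabilityMeasure (μ i)] {i j : ι} (hij : i ≠ j) :
    MeasurePreserving (fun z : ∀ i, E i ↦ (z i, z j)) (Measure.pi μ) ((μ i).prod (μ j)) := by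
  refine ⟨(measurable_pi_apply i).prodMk (measurable_pi_apply j), ?_⟩
  have hindep : IndepFun (fun z : ∀ i, E i ↦ z i) (fun z ↦ z j) (Measure.pi μ) :=
    (iIndepFun_pi (X := fun _ x ↦ x) fun _ ↦ aemeasurable_id).indepFun hij
  rw [(indepFun_iff_map_prod_eq_prod_map_map (measurable_pi_apply i).aemeasurable
    (measurable_pi_apply j).aemeasurable).1 hindep,
    (measurePreserving_eval μ i).map_eq, (measurePreserving_eval μ j).map_eq]

lemma measurable_weightedVStat (hK : Measurable (Function.uncurry K)) (a : ι → ℝ) :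
    Measurable (weightedVStat K a) :=
  Finset.measurable_sum _ fun i _ ↦ Finset.measurable_sum _ fun j _ ↦
    (hK.comp (f := fun z : ι → E ↦ (z i, z j)) (by fun_prop)).const_mul _

variable {p : Measure E} [IsProbabilityMeasure p]

lemma integrable_kernel_eval_eval (hdiag : Integrable (fun x ↦ K x x) p)
    (hprod : Integrable (Function.uncurry K) (p.prod p)) (i j : ι) :
    Integrable (fun z ↦ K (z i) (z j)) (Measure.pi fun _ ↦ p) := by
  rcases eq_or_ne i j with rfl | hij
  · exact (measurePreserving_eval (fun _ ↦ p) i).integrable_comp_of_integrable hdiag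
  · exact (measurePreserving_eval_pair (fun _ ↦ p) hij).integrable_comp_of_integrable hprod

lemma integral_kernel_eval_eval [DecidableEq ι] (hdiag : Integrable (fun x ↦ K x x) p)
    (hprod : Integrable (Function.uncurry K) (p.prod p)) (i j : ι) :
    ∫ z, K (z i) (z j) ∂(Measure.pi fun _ ↦ p) =
      if i = j then ∫ x, K x x ∂p else ∫ u, Function.uncurry K u ∂(p.prod p) := by
  split_ifs with hij
  · subst hij
    exact integral_comp_of_measurePreserving (measurePreserving_eval (fun _ ↦ p) i)
      hdiag.aestronglyMeasurable
  · exact integral_comp_of_measurePreserving (measurePreserving_eval_pair (fun _ ↦ p) hij)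
      hprod.aestronglyMeasurable

lemma integrable_weightedVStat (hdiag : Integrable (fun x ↦ K x x) p)
    (hprod : Integrable (Function.uncurry K) (p.prod p)) (a : ι → ℝ) :
    Integrable (weightedVStat K a) (Measure.pi fun _ ↦ p) :=
  integrable_finsetSum _ fun i _ ↦ integrable_finsetSum _ fun j _ ↦
    (integrable_kernel_eval_eval hdiag hprod i j).const_mul _

lemma integral_weightedVStat (hdiag : Integrable (fun x ↦ K x x) p)
    (hprod : Integrable (Function.uncurry K) (p.prod p)) (a : ι → ℝ) :
    ∫ z, weightedVStat K a z ∂(Measure.pi fun _ ↦ p) =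
      (∑ i, a i ^ 2) * ∫ x, K x x ∂p +
        ((∑ i, a i) ^ 2 - ∑ i, a i ^ 2) * ∫ u, Function.uncurry K u ∂(p.prod p) := by
  classical
  have hint (i j : ι) := (integrable_kernel_eval_eval hdiag hprod i j).const_mul (a i * a j)
  have hterm (i j : ι) :
      ∫ z, a i * a j * K (z i) (z j) ∂(Measure.pi fun _ ↦ p) =
        a i * a j * (∫ u, Function.uncurry K u ∂(p.prod p)) +
          if i = j then a i * a j * (∫ x, K x x ∂p - ∫ u, Function.uncurry K u ∂(p.prod p))
            else 0 := by
    rw [integral_const_mul, integral_kernel_eval_eval hdiag hprod]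
    split_ifs <;> ring
  simp_rw [weightedVStat, integral_finsetSum _ fun i _ ↦ integrable_finsetSum _ fun j _ ↦ hint i j,
    integral_finsetSum _ fun j _ ↦ hint _ j, hterm, Finset.sum_add_distrib, ← Finset.sum_mul,
    ← Finset.mul_sum, Finset.sum_ite_eq, Finset.mem_univ, if_true, ← Finset.sum_mul, ← sq]
  ring

section Bounded

variable {κ : ℝ≥0}

lemma integrable_diag_of_abs_le (hK : Measurable (Function.uncurry K))
    (hbdd : ∀ x y, |K x y| ≤ κ) : Integrable (fun x ↦ K x x) p :=
  .of_bound (hK.comp (measurable_id.prodMk measurable_id)).aestronglyMeasurable κ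
    (.of_forall fun x ↦ hbdd x x)

lemma integrable_uncurry_of_abs_le (hK : Measurable (Function.uncurry K))
    (hbdd : ∀ x y, |K x y| ≤ κ) : Integrable (Function.uncurry K) (p.prod p) :=
  .of_bound hK.aestronglyMeasurable κ (.of_forall fun u ↦ hbdd u.1 u.2)

lemma integral_weightedVStat_le (hK : Measurable (Function.uncurry K))
    (hbdd : ∀ x y, |K x y| ≤ κ) {a : ι → ℝ} (ha : ∑ i, a i = 0) :
    ∫ z, weightedVStat K a z ∂(Measure.pi fun _ ↦ p) ≤ 2 * (κ * ∑ i, a i ^ 2) := by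
  have hdiag := integrable_diag_of_abs_le (p := p) hK hbdd
  have hprod := integrable_uncurry_of_abs_le (p := p) hK hbdd
  have hdiag_le : ∫ x, K x x ∂p ≤ κ := by
    simpa using integral_mono hdiag (integrable_const (κ : ℝ)) fun x ↦ (abs_le.1 (hbdd x x)).2
  have hprod_ge : -κ ≤ ∫ u, Function.uncurry K u ∂(p.prod p) := by
    simpa using integral_mono (integrable_const (-κ : ℝ)) hprod fun u ↦
      (abs_le.1 (hbdd u.1 u.2)).1
  calc _ = (∑ i, a i ^ 2) * (∫ x, K x x ∂p - ∫ u, Function.uncurry K u ∂(p.prod p)) := by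
        rw [integral_weightedVStat hdiag hprod, ha]; ring
    _ ≤ (∑ i, a i ^ 2) * (κ - -κ) := by gcongr
    _ = 2 * (κ * ∑ i, a i ^ 2) := by ring

lemma integral_sqrt_weightedVStat_le (hK : Measurable (Function.uncurry K))
    (hpsd : (Matrix.of K).PosSemidef) (hbdd : ∀ x y, |K x y| ≤ κ) {a : ι → ℝ}
    (ha : ∑ i, a i = 0) :
    ∫ z, √(weightedVStat K a z) ∂(Measure.pi fun _ ↦ p) ≤ √(2 * (κ * ∑ i, a i ^ 2)) := by
  classical
  have hsqrt : Integrable (fun z ↦ √(weightedVStat K a z)) (Measure.pi fun _ ↦ p) :=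
    (hasBoundedDifferences_sqrt_weightedVStat hpsd (fun x ↦ (abs_le.1 (hbdd x x)).2) a).integrable
      (measurable_weightedVStat hK a).sqrt.aemeasurable
  calc ∫ z, √(weightedVStat K a z) ∂(Measure.pi fun _ ↦ p)
      ≤ √(∫ z, weightedVStat K a z ∂(Measure.pi fun _ ↦ p)) :=
        strictConcaveOn_sqrt.concaveOn.le_map_integral continuous_sqrt.continuousOn isClosed_Ici
          (.of_forall (weightedVStat_nonneg hpsd a))
          (integrable_weightedVStat (integrable_diag_of_abs_le hK hbdd)
            (integrable_uncurry_of_abs_le hK hbdd) a) hsqrt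
    _ ≤ _ := sqrt_le_sqrt (integral_weightedVStat_le hK hbdd ha)

lemma hasSubgaussianMGF_sqrt_weightedVStat (hK : Measurable (Function.uncurry K))
    (hpsd : (Matrix.of K).PosSemidef) (hdiag : ∀ x, K x x ≤ κ) (a : ι → ℝ) :
    HasSubgaussianMGF (fun z ↦ √(weightedVStat K a z) -
        ∫ w, √(weightedVStat K a w) ∂(Measure.pi fun _ ↦ p))
      (κ * ∑ i, ‖a i‖₊ ^ 2) (Measure.pi fun _ ↦ p) := by
  classical
  have hproxy : ∑ i, (2 * NNReal.sqrt κ * ‖a i‖₊ / 2) ^ 2 = κ * ∑ i, ‖a i‖₊ ^ 2 := by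
    rw [Finset.mul_sum]
    refine Finset.sum_congr rfl fun i _ ↦ ?_
    rw [mul_assoc, mul_div_cancel_left₀ _ two_ne_zero, mul_pow, NNReal.sq_sqrt]
  exact hproxy ▸ (hasBoundedDifferences_sqrt_weightedVStat hpsd hdiag a).hasSubgaussianMGF
    (measurable_weightedVStat hK a).sqrt

theorem measureReal_lt_weightedVStat_le (hK : Measurable (Function.uncurry K))
    (hpsd : (Matrix.of K).PosSemidef) (hbdd : ∀ x y, |K x y| ≤ κ) {a : ι → ℝ}
    (ha : ∑ i, a i = 0) (hκa : 0 < κ * ∑ i, a i ^ 2) {L t : ℝ} (hL : 0 ≤ L)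
    (ht : 4 * (κ * ∑ i, a i ^ 2) * (1 + L) ≤ t) :
    (Measure.pi fun _ ↦ p).real {z | t < weightedVStat K a z} ≤ exp (-L) := by
  set v : ℝ := κ * ∑ i, a i ^ 2 with hv
  have hsub (z : ι → E) (hz : t < weightedVStat K a z) :
      √(2 * v * L) ≤ √(weightedVStat K a z) -
        ∫ w, √(weightedVStat K a w) ∂(Measure.pi fun _ ↦ p) := by
    have hmean : ∫ w, √(weightedVStat K a w) ∂(Measure.pi fun _ ↦ p) ≤ √(2 * v) :=
      integral_sqrt_weightedVStat_le hK hpsd hbdd ha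
    have hsq : (√(2 * v) + √(2 * v * L)) ^ 2 ≤ weightedVStat K a z := by
      refine add_sq_le.trans (le_of_eq_of_le ?_ (ht.trans hz.le))
      rw [sq_sqrt (by positivity), sq_sqrt (by positivity)]
      ring
    linarith [le_sqrt_of_sq_le hsq]
  calc _ ≤ (Measure.pi fun _ ↦ p).real {z | √(2 * v * L) ≤ √(weightedVStat K a z) -
        ∫ w, √(weightedVStat K a w) ∂(Measure.pi fun _ ↦ p)} := measureReal_mono hsub
    _ ≤ exp (-√(2 * v * L) ^ 2 / (2 * v)) := by
        simpa [hv] using (hasSubgaussianMGF_sqrt_weightedVStat (p := p) hK hpsd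
          (fun x ↦ (abs_le.1 (hbdd x x)).2) a).measure_ge_le (sqrt_nonneg _)
    _ = exp (-L) := by
        rw [sq_sqrt (by positivity), neg_div, mul_div_cancel_left₀ _ (by positivity)]

end Bounded

lemma ae_weightedVStat_le_of_kernel_ae_eq_zero {κ : ℝ} (hzero : Function.uncurry K =ᵐ[p.prod p] 0)
    (hdiag : ∀ x, K x x ≤ κ) (a : ι → ℝ) :
    ∀ᵐ z ∂(Measure.pi fun _ ↦ p), weightedVStat K a z ≤ κ * ∑ i, a i ^ 2 := by
  have hoff : ∀ᵐ z ∂(Measure.pi fun _ : ι ↦ p), ∀ i j, i ≠ j → K (z i) (z j) = 0 := by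
    simp only [ae_all_iff]
    exact fun i j hij ↦
      (measurePreserving_eval_pair (fun _ ↦ p) hij).quasiMeasurePreserving.ae hzero
  filter_upwards [hoff] with z hz
  rw [weightedVStat, Finset.mul_sum]
  refine Finset.sum_le_sum fun i _ ↦ ?_
  rw [Fintype.sum_eq_single i fun j hji ↦ by rw [hz i j hji.symm, mul_zero], ← sq, mul_comm]
  gcongr
  exact hdiag _

end Product

lemma measurePreserving_sumElim {ι κ E : Type*} [Fintype ι] [Fintype κ] [MeasurableSpace E]
    (p : Measure E) [SigmaFinite p] :
    MeasurePreserving (fun ω : (ι → E) × (κ → E) ↦ Sum.elim ω.1 ω.2)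
      ((Measure.pi fun _ ↦ p).prod (Measure.pi fun _ ↦ p)) (Measure.pi fun _ ↦ p) := by
  convert measurePreserving_sumPiEquivProdPi_symm (fun _ : ι ⊕ κ ↦ p) using 1
  ext ω (i | j) <;> rfl

lemma ae_eq_zero_of_integral_integral_sq_le_zero {X Y : Type*} [MeasurableSpace X]
    [MeasurableSpace Y] {μ : Measure X} {ν : Measure Y} [SFinite μ] [SFinite ν] {f : X → Y → ℝ}
    (hf : Integrable (fun u : X × Y ↦ f u.1 u.2 ^ 2) (μ.prod ν))
    (hint : ∫ x, ∫ y, f x y ^ 2 ∂ν ∂μ ≤ 0) : Function.uncurry f =ᵐ[μ.prod ν] 0 := by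
  rw [← integral_prod _ hf] at hint
  have hsq := (integral_eq_zero_iff_of_nonneg (fun _ ↦ sq_nonneg _) hf).1
    (hint.antisymm (integral_nonneg fun _ ↦ sq_nonneg _))
  filter_upwards [hsq] with u hu
  exact pow_eq_zero_iff two_ne_zero |>.1 hu

/-- The weights `1 / nX` on the first sample and `-1 / nY` on the second for which the squared MMD
statistic is a `weightedVStat` of the pooled sample. -/
noncomputable def mmdWeights (nX nY : ℕ) : Fin nX ⊕ Fin nY → ℝ :=
  Sum.elim (fun _ ↦ 1 / nX) (fun _ ↦ -1 / nY)

section MMD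

variable {nX nY : ℕ}

lemma sum_mmdWeights (hX : nX ≠ 0) (hY : nY ≠ 0) : ∑ i, mmdWeights nX nY i = 0 := by
  simp [mmdWeights, hX, hY, neg_div]

lemma sum_mmdWeights_sq : ∑ i, mmdWeights nX nY i ^ 2 = 1 / nX + 1 / nY := by
  have hsq (n : ℕ) : (n : ℝ) * ((n : ℝ) ^ 2)⁻¹ = (n : ℝ)⁻¹ := by
    rcases eq_or_ne n 0 with rfl | hn
    · simp
    · field_simp
  simp [mmdWeights, neg_div, hsq]

variable {E : Type*} {K : E → E → ℝ}

lemma mmdStat_eq_weightedVStat (hsym : ∀ x y, K x y = K y x) (ω : (Fin nX → E) × (Fin nY → E)) :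
    mmdStat K nX nY ω = weightedVStat K (mmdWeights nX nY) (Sum.elim ω.1 ω.2) := by
  have hswap : ∑ i, ∑ j, K (ω.2 i) (ω.1 j) = ∑ i, ∑ j, K (ω.1 i) (ω.2 j) := by
    rw [Finset.sum_comm]
    simp_rw [hsym (ω.2 _)]
  simp only [mmdStat, weightedVStat, mmdWeights, Fintype.sum_sum_type, Sum.elim_inl, Sum.elim_inr,
    Finset.sum_add_distrib, ← Finset.mul_sum, hswap]
  ring

variable [MeasurableSpace E] {p : Measure E}

lemma measure_lt_mmdStat [SigmaFinite p] (hK : Measurable (Function.uncurry K))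
    (hsym : ∀ x y, K x y = K y x) (t : ℝ) :
    ((Measure.pi fun _ : Fin nX ↦ p).prod (Measure.pi fun _ : Fin nY ↦ p))
        {ω | t < mmdStat K nX nY ω} =
      (Measure.pi fun _ ↦ p) {z | t < weightedVStat K (mmdWeights nX nY) z} := by
  simp only [mmdStat_eq_weightedVStat hsym]
  exact (measurePreserving_sumElim p).measure_preimage
    (measurableSet_lt measurable_const (measurable_weightedVStat hK _)).nullMeasurableSet

variable [IsProbabilityMeasure p]

lemma measure_lt_mmdStat_le (hK : Measurable (Function.uncurry K))
    (hpsd : (Matrix.of K).PosSemidef) (hbdd : ∀ x y, |K x y| ≤ 1) (hX : nX ≠ 0) (hY : nY ≠ 0)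
    {L t : ℝ} (hL : 0 ≤ L) (ht : 4 * (1 / nX + 1 / nY) * (1 + L) ≤ t) :
    ((Measure.pi fun _ : Fin nX ↦ p).prod (Measure.pi fun _ : Fin nY ↦ p))
        {ω | t < mmdStat K nX nY ω} ≤ ENNReal.ofReal (exp (-L)) := by
  have hvar : 0 < (1 : ℝ≥0) * ∑ i, mmdWeights nX nY i ^ 2 := by
    rw [sum_mmdWeights_sq]
    positivity
  rw [measure_lt_mmdStat hK fun x y ↦ by simpa using hpsd.isHermitian.apply y x,
    ENNReal.le_ofReal_iff_toReal_le (measure_ne_top _ _) (exp_nonneg _)]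
  refine measureReal_lt_weightedVStat_le hK hpsd (by simpa using hbdd) (sum_mmdWeights hX hY) hvar
    hL (ht.trans_eq' ?_)
  rw [sum_mmdWeights_sq, NNReal.coe_one, one_mul]

lemma measure_lt_mmdStat_eq_zero (hK : Measurable (Function.uncurry K))
    (hsym : ∀ x y, K x y = K y x) (hbdd : ∀ x y, |K x y| ≤ 1)
    (hsq : ∫ x, ∫ y, K x y ^ 2 ∂p ∂p ≤ 0) {t : ℝ} (ht : 1 / nX + 1 / nY ≤ t) :
    ((Measure.pi fun _ : Fin nX ↦ p).prod (Measure.pi fun _ : Fin nY ↦ p))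
        {ω | t < mmdStat K nX nY ω} = 0 := by
  have hint : Integrable (fun u : E × E ↦ K u.1 u.2 ^ 2) (p.prod p) :=
    .of_bound (hK.pow_const 2).aestronglyMeasurable 1 (.of_forall fun u ↦ by
      simpa using hbdd u.1 u.2)
  have hae := ae_weightedVStat_le_of_kernel_ae_eq_zero
    (ae_eq_zero_of_integral_integral_sq_le_zero hint hsq) (fun x ↦ (abs_le.1 (hbdd x x)).2)
    (mmdWeights nX nY)
  rw [measure_lt_mmdStat hK hsym]
  simp_rw [← not_le]
  exact ae_iff.1 (hae.mono fun z hz ↦ hz.trans (by rwa [sum_mmdWeights_sq, one_mul]))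

end MMD

section Threshold

variable {m ν α : ℝ}

lemma div_three_mul_le_sqrt_mul_sqrt {x : ℝ} (hm : 0 < m) (hx : 0 ≤ x) (hxm : x ≤ 9 * ν * m) :
    x / (3 * m) ≤ √x * √(ν / m) := by
  have hsqrt : √x / (3 * m) ≤ √(ν / m) := by
    refine le_sqrt_of_sq_le ?_
    rw [div_pow, sq_sqrt hx, div_le_div_iff₀ (by positivity) hm]
    nlinarith
  calc x / (3 * m) = √x * (√x / (3 * m)) := by rw [mul_div_assoc', mul_self_sqrt hx]
    _ ≤ √x * √(ν / m) := by gcongr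

lemma eight_mul_one_add_log_div_le (hm : 0 < m) (hα : 0 < α) (hα1 : α ≤ 1)
    (hlog : 8 * log (4 / α) ≤ 9 * ν * m) :
    8 * (1 + log (1 / α)) / m ≤ 4 / m + 4 * √(8 * log (4 / α)) * √(ν / m) := by
  have hlog4 : 1 ≤ log 4 := by
    rw [le_log_iff_exp_le (by norm_num)]
    linarith [exp_one_lt_d9]
  have hlogα : 0 ≤ log (1 / α) := log_nonneg (one_le_one_div hα hα1)
  have hsplit : log (4 / α) = log 4 + log (1 / α) := by
    rw [← log_mul (by norm_num) (by positivity), mul_one_div]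
  have hsqrt := div_three_mul_le_sqrt_mul_sqrt hm (by linarith) hlog
  calc 8 * (1 + log (1 / α)) / m ≤ (4 + 4 / 3 * (8 * log (4 / α))) / m := by
        gcongr
        linarith
    _ = 4 / m + 4 * (8 * log (4 / α) / (3 * m)) := by ring
    _ ≤ 4 / m + 4 * (√(8 * log (4 / α)) * √(ν / m)) := by gcongr
    _ = _ := by ring

end Threshold

theorem mmd_type_I_error_general {E : Type*} [MeasurableSpace E] {K : E → E → ℝ}
    (hK : Measurable (Function.uncurry K)) (hpsd : (Matrix.of K).PosSemidef)
    (hbdd : ∀ x y, |K x y| ≤ 1) {p : Measure E} [IsProbabilityMeasure p] {ν : ℝ}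
    (hν : ∫ x, ∫ y, K x y ^ 2 ∂p ∂p ≤ ν) {nX nY : ℕ} {c : ℝ} (hc : 0 < c)
    (hbalX : c * (nX + nY : ℕ) ≤ nX) (hbalY : c * (nX + nY : ℕ) ≤ nY) {α : ℝ} (hα : 0 < α)
    (hα1 : α ≤ 1) (hn : √(8 * log (4 / α)) ^ 2 / (9 * ν * c) < (nX + nY : ℕ)) :
    ((Measure.pi fun _ : Fin nX ↦ p).prod (Measure.pi fun _ : Fin nY ↦ p))
        {ω | 4 / (c * (nX + nY : ℕ)) + 4 * √(8 * log (4 / α)) * √(ν / (c * (nX + nY : ℕ))) <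
          mmdStat K nX nY ω} ≤ ENNReal.ofReal α := by
  have hν0 : 0 ≤ ν := le_trans (by positivity) hν
  have hnpos : (0 : ℝ) < (nX + nY : ℕ) := lt_of_le_of_lt (by positivity) hn
  have hm : 0 < c * (nX + nY : ℕ) := by positivity
  rw [← div_div, div_lt_iff₀ hc, mul_comm _ c] at hn
  generalize c * ((nX + nY : ℕ) : ℝ) = m at *
  have hX : (0 : ℝ) < nX := hm.trans_le hbalX
  have hY : (0 : ℝ) < nY := hm.trans_le hbalY
  have hvar : 1 / (nX : ℝ) + 1 / nY ≤ 2 / m :=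
    calc 1 / (nX : ℝ) + 1 / nY ≤ 1 / m + 1 / m := by gcongr
      _ = 2 / m := by ring
  rcases hν0.eq_or_lt with rfl | hνpos
  -- For `ν = 0` the junk value `x / 0 = 0` makes `hn` void, but then `K` vanishes `p ⊗ p`-a.e.
  · have hsym (x y : E) : K x y = K y x := by simpa using hpsd.isHermitian.apply y x
    refine (measure_lt_mmdStat_eq_zero hK hsym hbdd hν ?_).trans_le zero_le
    calc 1 / (nX : ℝ) + 1 / nY ≤ 2 / m := hvar
      _ ≤ 4 / m := by gcongr; norm_num
      _ ≤ _ := le_add_of_nonneg_right (by positivity)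
  · have hlog : 8 * log (4 / α) ≤ 9 * ν * m := by
      have : 0 ≤ log (4 / α) := log_nonneg (by rw [le_div_iff₀ hα]; linarith)
      rw [sq_sqrt (by positivity), div_lt_iff₀ (by positivity)] at hn
      linarith
    have hL : 0 ≤ log (1 / α) := log_nonneg (one_le_one_div hα hα1)
    have hexp : exp (-log (1 / α)) = α := by rw [one_div, log_inv, neg_neg, exp_log hα]
    refine (measure_lt_mmdStat_le hK hpsd hbdd (Nat.cast_pos.1 hX).ne' (Nat.cast_pos.1 hY).ne'
      hL ?_).trans_eq (by rw [hexp])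
    calc 4 * (1 / (nX : ℝ) + 1 / nY) * (1 + log (1 / α))
        ≤ 4 * (2 / m) * (1 + log (1 / α)) := by gcongr
      _ = 8 * (1 + log (1 / α)) / m := by ring
      _ ≤ _ := eight_mul_one_add_log_div_le hm hα hα1 hlog

/-- Theorem 3.1, Type-I error part: under `H₀ : p = q`, with threshold
`t_thres = 4/(cn) + 4λ₁√(ν/(cn))`, `λ₁ = √(8 log(4/α))`, if `n > λ₁²/(9νc)` then
`Pr[T̂ > t_thres] ≤ α`. -/
theorem mmd_type_I_error
    {d : ℕ} (𝒳 : Set (EuclideanSpace ℝ (Fin d))) (h𝒳 : MeasurableSet 𝒳)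
    (K : 𝒳 → 𝒳 → ℝ)
    (hKmeas : Measurable (Function.uncurry K))
    (hKsym : ∀ x y, K x y = K y x)
    (hKpsd : ∀ (m : ℕ) (z : Fin m → 𝒳) (a : Fin m → ℝ),
      0 ≤ ∑ i, ∑ j, a i * a j * K (z i) (z j))
    (hKbdd : ∀ x y, |K x y| ≤ 1)
    (p q : Measure 𝒳) [IsProbabilityMeasure p] [IsProbabilityMeasure q]
    (ν : ℝ) (hν1 : ν ≤ 1)
    (hνpp : ∫ x, ∫ y, (K x y)^2 ∂p ∂p ≤ ν)
    (hνpq : ∫ x, ∫ y, (K x y)^2 ∂q ∂p ≤ ν)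
    (hνqq : ∫ x, ∫ y, (K x y)^2 ∂q ∂q ≤ ν)
    (nX nY : ℕ) (c : ℝ) (hc : 0 < c) (hc1 : c < 1)
    (hbalX : c * ((nX + nY : ℕ) : ℝ) + 1 ≤ (nX : ℝ))
    (hbalY : c * ((nX + nY : ℕ) : ℝ) + 1 ≤ (nY : ℝ))
    (hH0 : p = q)
    (α : ℝ) (hα : 0 < α) (hα1 : α < 1)
    (hn : ((nX + nY : ℕ) : ℝ) > (Real.sqrt (8 * Real.log (4/α)))^2 / (9 * ν * c)) :
    ((Measure.pi fun _ : Fin nX => p).prod (Measure.pi fun _ : Fin nY => q))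
      {ω : (Fin nX → 𝒳) × (Fin nY → 𝒳) |
        mmdStat K nX nY ω >
          4/(c * ((nX + nY : ℕ) : ℝ))
          + 4 * Real.sqrt (8 * Real.log (4/α))
              * Real.sqrt (ν/(c * ((nX + nY : ℕ) : ℝ)))}
      ≤ ENNReal.ofReal α := by
  subst hH0
  exact mmd_type_I_error_general hKmeas (posSemidef_of_forall_fin_sum_nonneg hKsym hKpsd) hKbdd
    hνpp hc (by linarith) (by linarith) hα hα1.le hn
end

section
/- (Theorem 3.1, power part.) Assume the alternative hypothesis p ≠ q with δ_K > 0. Let α_level ∈ (0,1), define λ₁ = √(8 log(4/α_level)) and the threshold t_thres = 4/(c n) + 4 λ₁ √(ν/(c n)). If for some λ₂ > 0, n > (1/c) · max{ max{λ₁, λ₂}²/(9 ν), 8/δ_K, (ν/δ_K²)·(8(λ₁ + λ₂))² }, then the probability (under the product law p^{⊗n_X} ⊗ q^{⊗n_Y}) that T̂ ≤ t_thres is at most 3 e^{−λ₂²/8}. -/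
open MeasureTheory Real
open scoped BigOperators ENNReal

/-- The squared population MMD `δ_K = ∬ K d(p−q)d(p−q)`, written out as
`∬K dp dp − 2∬K dp dq + ∬K dq dq`. -/
noncomputable def deltaK {𝒳 : Type*} [MeasurableSpace 𝒳] (K : 𝒳 → 𝒳 → ℝ)
    (p q : Measure 𝒳) : ℝ :=
  (∫ x, ∫ y, K x y ∂p ∂p) - 2 * (∫ x, ∫ y, K x y ∂q ∂p) + (∫ x, ∫ y, K x y ∂q ∂q)

/-!
Positive semidefiniteness makes each V-statistic in `T̂` at least the corresponding U-statistic, so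
it suffices to bound the lower tails of the two U-statistics and the upper tail of the cross term.
Following Hoeffding, each of these is an average, over permutations of the samples, of means over
disjoint, hence independent, pairs; by convexity of `exp` the average inherits the bound on the
moment generating function of a single such mean. For summands at most `1` with second moment at
most `ν`, the inequality `exp u ≤ 1 + u + u²`, valid for `u ≤ 3 / 2`, gives a sub-Gaussian bound for
deviations up to `3 ν`. The sample size condition makes the threshold smaller than
`δ_K - 4 λ₂ √(ν / (c n))`, and the union bound over the three tails with deviation
`λ₂ √(ν / (c n))` concludes.
-/

open ProbabilityTheory Function MulAction

section Averages

lemma expect_smul_eq_expect {G α M : Type*} [Group G] [Fintype G] [Fintype α] [MulAction G α]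
    [IsPretransitive G α] [AddCommMonoid M] [Module ℚ≥0 M] (f : α → M) (a : α) :
    𝔼 g : G, f (g • a) = 𝔼 x, f x := by
  have expect_orbit (x : α) : 𝔼 g : G, f (g • x) = 𝔼 g : G, f (g • a) := by
    obtain ⟨h, rfl⟩ := exists_smul_eq G a x
    exact Fintype.expect_equiv (Equiv.mulRight h) _ _ fun g ↦ by simp [mul_smul]
  have expect_translate (g : G) : 𝔼 x, f (g • x) = 𝔼 x, f x :=
    Fintype.expect_equiv (toPerm g) _ _ fun _ ↦ rfl
  have : Nonempty α := ⟨a⟩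
  calc 𝔼 g : G, f (g • a) = 𝔼 x : α, 𝔼 g : G, f (g • x) := by
        simp only [expect_orbit, Fintype.expect_const]
    _ = 𝔼 g : G, 𝔼 x : α, f (g • x) := Finset.expect_comm ..
    _ = 𝔼 x, f x := by simp only [expect_translate, Fintype.expect_const]

lemma sum_embedding_fin_two {α M : Type*} [Fintype α] [AddCommGroup M]
    (f : α → α → M) :
    ∑ e : Fin 2 ↪ α, f (e 0) (e 1) = ∑ i, ∑ j, f i j - ∑ i, f i i := by
  classical
  have sum_ne : ∑ e : Fin 2 ↪ α, f (e 0) (e 1) = ∑ z : α × α with z.1 ≠ z.2, f z.1 z.2 :=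
    Finset.sum_nbij (fun e ↦ (e 0, e 1)) (by simp)
      (fun e _ e' _ h ↦ by ext i; fin_cases i <;> simp_all)
      (fun z hz ↦ ⟨Embedding.embFinTwo (by simpa using hz), by simp, rfl⟩) (fun _ _ ↦ rfl)
  have sum_eq : ∑ z : α × α with z.1 = z.2, f z.1 z.2 = ∑ i, f i i :=
    Finset.sum_nbij' Prod.fst (fun i ↦ (i, i)) (by simp) (by simp) (by simp +contextual)
      (by simp) (by simp +contextual)
  rw [sum_ne, eq_sub_iff_add_eq', ← sum_eq, Finset.sum_filter_add_sum_filter_not,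
    Fintype.sum_prod_type]

variable {α E : Type*} [Fintype α]

/-- The U-statistic of order two with kernel `f`: the average of `f` over all pairs of sample
points with distinct indices, an ordered pair of distinct indices being encoded as an embedding
of `Fin 2`. -/
noncomputable def uStat (f : E × E → ℝ) (x : α → E) : ℝ :=
  𝔼 e : Fin 2 ↪ α, f (x (e 0), x (e 1))

lemma uStat_neg (f : E × E → ℝ) (x : α → E) : uStat (-f) x = -uStat f x :=
  Finset.expect_neg_distrib ..

lemma expect_perm_eq_uStat [DecidableEq α] (f : E × E → ℝ) (x : α → E) {i j : α} (hij : i ≠ j) :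
    𝔼 σ : Equiv.Perm α, f (x (σ i), x (σ j)) = uStat f x :=
  have := Equiv.Perm.isMultiplyPretransitive α 2
  expect_smul_eq_expect (fun e : Fin 2 ↪ α ↦ f (x (e 0), x (e 1))) (Embedding.embFinTwo hij)

lemma expect_prod_perm_eq_expect_expect [DecidableEq α] {β F : Type*} [Fintype β] [DecidableEq β]
    (f : E × F → ℝ) (x : α → E) (y : β → F) (i : α) (j : β) :
    𝔼 στ : Equiv.Perm α × Equiv.Perm β, f (x (στ.1 i), y (στ.2 j)) =
      𝔼 i, 𝔼 j, f (x i, y j) := by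
  rw [← Finset.univ_product_univ, Finset.expect_product]
  calc 𝔼 σ : Equiv.Perm α, 𝔼 τ : Equiv.Perm β, f (x (σ i), y (τ j))
      = 𝔼 σ : Equiv.Perm α, 𝔼 j, f (x (σ i), y j) := by
        congr! with σ
        exact expect_smul_eq_expect (fun j ↦ f (x (σ i), y j)) j
    _ = 𝔼 i, 𝔼 j, f (x i, y j) := expect_smul_eq_expect (fun i ↦ 𝔼 j, f (x i, y j)) i

-- With `n` points, `V` the full average, `D` the diagonal one and `U` the U-statistic,
-- `n V = D + (n - 1) U`; the hypothesis gives `V ≤ D`, so that `U ≤ V`.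
lemma uStat_le_expect_expect [Nontrivial α] {f : E × E → ℝ}
    (hf : ∀ x y, f (x, y) + f (y, x) ≤ f (x, x) + f (y, y)) (x : α → E) :
    uStat f x ≤ 𝔼 i, 𝔼 j, f (x i, x j) := by
  have hn1 : 1 < (Fintype.card α : ℝ) := by exact_mod_cast Fintype.one_lt_card (α := α)
  set n := (Fintype.card α : ℝ) with hn
  set V := 𝔼 i, 𝔼 j, f (x i, x j) with hV
  set D := 𝔼 i, f (x i, x i)
  have sum_V : ∑ i, ∑ j, f (x i, x j) = n * (n * V) := by
    rw [hV, hn, Fintype.card_mul_expect, Finset.mul_sum]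
    simp only [Fintype.card_mul_expect]
  have sum_D : ∑ i, f (x i, x i) = n * D := (Fintype.card_mul_expect _).symm
  have sum_U : n * (n - 1) * uStat f x = n * (n * V) - n * D := by
    have hcard : (Fintype.card (Fin 2 ↪ α) : ℝ) = n * (n - 1) := by
      rw [Fintype.card_embedding_eq, Fintype.card_fin, Nat.cast_descFactorial_two]
    rw [← hcard, uStat, Fintype.card_mul_expect,
      sum_embedding_fin_two (fun i j ↦ f (x i, x j)), sum_V, sum_D]
  have hVD : V ≤ D := by
    have hle : 𝔼 i, 𝔼 j, (f (x i, x j) + f (x j, x i)) ≤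
        𝔼 i, 𝔼 j, (f (x i, x i) + f (x j, x j)) :=
      Finset.expect_le_expect fun i _ ↦ Finset.expect_le_expect fun j _ ↦ hf _ _
    simp only [Finset.expect_add_distrib, Fintype.expect_const] at hle
    rw [Finset.expect_comm Finset.univ Finset.univ fun i j ↦ f (x j, x i)] at hle
    linarith
  have hn0 : 0 < n * (n - 1) := mul_pos (by linarith) (by linarith)
  refine le_of_mul_le_mul_left ?_ hn0
  nlinarith

end Averages

section Bernstein

lemma exp_le_one_add_add_sq {u : ℝ} (hu : u ≤ 3 / 2) : exp u ≤ 1 + u + u ^ 2 := by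
  rcases le_total u (-1) with hu_neg | hu_neg
  · have : exp u ≤ 1 := exp_le_one_iff.2 (by linarith)
    nlinarith
  rcases le_total u 1 with hu_one | hu_one
  · linarith [(abs_le.1 (abs_exp_sub_one_sub_id_le (abs_le.2 ⟨hu_neg, hu_one⟩))).2]
  -- `u` exceeds the range of the Taylor estimates, but `v = u / 2` does not.
  obtain ⟨v, rfl⟩ : ∃ v, u = 2 * v := ⟨u / 2, by ring⟩
  have hv0 : 0 ≤ v := by linarith
  have hv : v ≤ 3 / 4 := by linarith
  have exp_v : exp v ≤ 1 + v + v ^ 2 / 2 + 2 * v ^ 3 / 9 := by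
    have := exp_bound' hv0 (by linarith) (n := 3) (by norm_num)
    norm_num [Finset.sum_range_succ, Nat.factorial] at this
    linarith
  have cubic_le : 1 + v + v ^ 2 / 2 + 2 * v ^ 3 / 9 ≤ 1 + v + v ^ 2 * (2 / 3) := by
    nlinarith [mul_le_mul_of_nonneg_left hv (sq_nonneg v)]
  calc exp (2 * v) = exp v ^ 2 := by rw [← exp_nat_mul]; norm_num
    _ ≤ (1 + v + v ^ 2 * (2 / 3)) ^ 2 := by gcongr; exact exp_v.trans cubic_le
    _ ≤ 1 + 2 * v + (2 * v) ^ 2 := by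
      nlinarith [mul_le_mul_of_nonneg_left hv (sq_nonneg v),
        mul_le_mul_of_nonneg_left hv (pow_nonneg hv0 3)]

variable {Ω : Type*} [MeasurableSpace Ω] {μ : Measure Ω}

lemma mgf_le_exp_of_le_one [IsProbabilityMeasure μ] {X : Ω → ℝ} (hX : MemLp X 2 μ)
    (hX1 : ∀ᵐ ω ∂μ, X ω ≤ 1) {t : ℝ} (ht0 : 0 ≤ t) (ht : t ≤ 3 / 2) :
    mgf X μ t ≤ exp (t * μ[X] + t ^ 2 * μ[X ^ 2]) := by
  have hint : Integrable X μ := hX.integrable one_le_two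
  have hint_sq : Integrable (X ^ 2) μ := hX.integrable_sq
  calc mgf X μ t ≤ ∫ ω, (1 + t * X ω + t ^ 2 * (X ^ 2) ω) ∂μ := by
        refine integral_mono_of_nonneg (.of_forall fun _ ↦ (exp_pos _).le) (by fun_prop) ?_
        filter_upwards [hX1] with ω hω
        simpa [mul_pow] using exp_le_one_add_add_sq (u := t * X ω) (by nlinarith)
    _ = t * μ[X] + t ^ 2 * μ[X ^ 2] + 1 := by
        rw [integral_add (by fun_prop) (by fun_prop), integral_add (by fun_prop) (by fun_prop),
          integral_const_mul, integral_const_mul, integral_const, probReal_univ]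
        simp only [smul_eq_mul]
        ring
    _ ≤ exp (t * μ[X] + t ^ 2 * μ[X ^ 2]) := add_one_le_exp _

lemma mgf_sum_le_exp_of_le_one {κ : Type*} [Fintype κ] {Z : κ → Ω → ℝ} (hZ : iIndepFun Z μ)
    (hL2 : ∀ k, MemLp (Z k) 2 μ) (hle : ∀ k, ∀ᵐ ω ∂μ, Z k ω ≤ 1) {I ν : ℝ}
    (hmean : ∀ k, μ[Z k] ≤ I) (hsq : ∀ k, μ[Z k ^ 2] ≤ ν) {t : ℝ} (ht0 : 0 ≤ t)
    (ht : t ≤ 3 / 2) :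
    mgf (∑ k, Z k) μ t ≤ exp (Fintype.card κ * (t * I + t ^ 2 * ν)) := by
  have := hZ.isProbabilityMeasure
  calc mgf (∑ k, Z k) μ t = ∏ k, mgf (Z k) μ t :=
        hZ.mgf_sum₀ (fun k ↦ (hL2 k).aemeasurable) _
    _ ≤ ∏ _k : κ, exp (t * I + t ^ 2 * ν) := by
        refine Finset.prod_le_prod (fun _ _ ↦ mgf_nonneg) fun k _ ↦ ?_
        refine (mgf_le_exp_of_le_one (hL2 k) (hle k) ht0 ht).trans ?_
        gcongr
        exacts [hmean k, hsq k]
    _ = exp (Fintype.card κ * (t * I + t ^ 2 * ν)) := by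
        rw [Finset.prod_const, Finset.card_univ, exp_nat_mul]

lemma exp_expect_le {Γ : Type*} [Fintype Γ] [Nonempty Γ] (u : Γ → ℝ) :
    exp (𝔼 g, u g) ≤ 𝔼 g, exp (u g) := by
  have := convexOn_exp.map_sum_le (t := Finset.univ) (w := fun _ : Γ ↦ (Fintype.card Γ : ℝ)⁻¹)
    (p := u) (fun _ _ ↦ by positivity) (by simp) (fun _ _ ↦ Set.mem_univ _)
  simpa only [Fintype.expect_eq_sum_div_card, div_eq_inv_mul, Finset.mul_sum, smul_eq_mul]
    using this

lemma mgf_expect_le {Γ : Type*} [Fintype Γ] [Nonempty Γ] {T : Γ → Ω → ℝ} {t C : ℝ}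
    (hint : ∀ g, Integrable (fun ω ↦ exp (t * T g ω)) μ) (hmgf : ∀ g, mgf (T g) μ t ≤ C) :
    mgf (fun ω ↦ 𝔼 g, T g ω) μ t ≤ C := by
  calc mgf (fun ω ↦ 𝔼 g, T g ω) μ t ≤ ∫ ω, (∑ g, exp (t * T g ω)) / Fintype.card Γ ∂μ := by
        refine integral_mono_of_nonneg (.of_forall fun _ ↦ (exp_pos _).le)
          ((integrable_finsetSum _ fun g _ ↦ hint g).div_const _) (.of_forall fun ω ↦ ?_)
        dsimp only
        rw [Finset.mul_expect, ← Fintype.expect_eq_sum_div_card]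
        exact exp_expect_le _
    _ = 𝔼 g, mgf (T g) μ t := by
        rw [integral_div, integral_finsetSum _ fun g _ ↦ hint g, Fintype.expect_eq_sum_div_card]
        rfl
    _ ≤ C := Finset.expect_le Finset.univ_nonempty fun g _ ↦ hmgf g

theorem measureReal_expect_sum_ge_le {Γ κ : Type*} [Fintype Γ] [Nonempty Γ] [Fintype κ]
    {Z : Γ → κ → Ω → ℝ} (hZ : ∀ g, iIndepFun (Z g) μ) (hL2 : ∀ g k, MemLp (Z g k) 2 μ)
    (hle : ∀ g k, ∀ᵐ ω ∂μ, Z g k ω ≤ 1) {I ν s : ℝ} (hmean : ∀ g k, μ[Z g k] ≤ I)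
    (hsq : ∀ g k, μ[Z g k ^ 2] ≤ ν) (hν : 0 < ν) (hs0 : 0 ≤ s) (hs : s ≤ 3 * ν) :
    μ.real {ω | Fintype.card κ * (I + s) ≤ 𝔼 g, ∑ k, Z g k ω} ≤
      exp (-(Fintype.card κ * s ^ 2 / (4 * ν))) := by
  have : IsProbabilityMeasure μ := (hZ (Classical.arbitrary Γ)).isProbabilityMeasure
  -- The minimiser of `-t s + t² ν`.
  obtain ⟨t, rfl⟩ : ∃ t, s = 2 * ν * t := ⟨s / (2 * ν), by field_simp⟩
  have ht0 : 0 ≤ t := nonneg_of_mul_nonneg_right hs0 (by positivity)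
  have ht : t ≤ 3 / 2 := by nlinarith
  have hmeas (g : Γ) : AEMeasurable (fun ω ↦ ∑ k, Z g k ω) μ :=
    Finset.aemeasurable_fun_sum _ fun k _ ↦ (hL2 g k).aemeasurable
  have hsum_le (g : Γ) : ∀ᵐ ω ∂μ, ∑ k, Z g k ω ≤ Fintype.card κ := by
    filter_upwards [ae_all_iff.2 (hle g)] with ω hω
    simpa using Finset.sum_le_card_nsmul Finset.univ _ 1 fun k _ ↦ hω k
  have hexpect_le : ∀ᵐ ω ∂μ, 𝔼 g, ∑ k, Z g k ω ≤ Fintype.card κ := by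
    filter_upwards [ae_all_iff.2 hsum_le] with ω hω
    exact Finset.expect_le Finset.univ_nonempty fun g _ ↦ hω g
  have hmeas_expect : AEMeasurable (fun ω ↦ 𝔼 g, ∑ k, Z g k ω) μ := by
    simp only [Fintype.expect_eq_sum_div_card]
    exact (Finset.aemeasurable_fun_sum _ fun g _ ↦ hmeas g).div_const _
  have hmgf : mgf (fun ω ↦ 𝔼 g, ∑ k, Z g k ω) μ t ≤
      exp (Fintype.card κ * (t * I + t ^ 2 * ν)) :=
    mgf_expect_le (fun g ↦ integrable_exp_mul_of_le _ _ ht0 (hmeas g) (hsum_le g)) fun g ↦ by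
      simpa only [Finset.sum_fn] using
        mgf_sum_le_exp_of_le_one (hZ g) (hL2 g) (hle g) (hmean g) (hsq g) ht0 ht
  calc _ ≤ exp (-t * (Fintype.card κ * (I + 2 * ν * t))) * _ :=
        measure_ge_le_exp_mul_mgf _ ht0 (integrable_exp_mul_of_le _ _ ht0 hmeas_expect hexpect_le)
    _ ≤ exp (-t * (Fintype.card κ * (I + 2 * ν * t))) *
          exp (Fintype.card κ * (t * I + t ^ 2 * ν)) := by gcongr
    _ = exp (-(Fintype.card κ * (2 * ν * t) ^ 2 / (4 * ν))) := by
        rw [← exp_add]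
        congr 1
        field_simp
        ring

end Bernstein

section Sampling

variable {Ω E : Type*} [MeasurableSpace Ω] {μ : Measure Ω} [MeasurableSpace E]

lemma iIndepFun_prodMk_inl_inr {κ : Type*} [Finite κ] {X : κ ⊕ κ → Ω → E}
    (hmeas : ∀ i, AEMeasurable (X i) μ) (hX : iIndepFun X μ) :
    iIndepFun (fun k ω ↦ (X (.inl k) ω, X (.inr k) ω)) μ := by
  cases nonempty_fintype κ
  have := hX.isProbabilityMeasure
  have hlaw (i : κ ⊕ κ) : HasLaw (X i) (μ.map (X i)) μ := ⟨hmeas i, rfl⟩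
  have (i : κ ⊕ κ) : IsProbabilityMeasure (μ.map (X i)) :=
    Measure.isProbabilityMeasure_map (hmeas i)
  have hpair (k : κ) : HasLaw (fun ω ↦ (X (.inl k) ω, X (.inr k) ω))
      ((μ.map (X (.inl k))).prod (μ.map (X (.inr k)))) μ :=
    (hX.indepFun Sum.inl_ne_inr).hasLaw_prod (hlaw _) (hlaw _)
  rw [iIndepFun_iff_hasLaw_pi_pi hpair]
  have hsplit := (measurePreserving_sumPiEquivProdPi fun i ↦ μ.map (X i)).fun_comp_hasLaw
    (hX.hasLaw_pi hlaw)
  exact (measurePreserving_arrowProdEquivProdArrow E E κ _ _).symm.fun_comp_hasLaw hsplit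

theorem measureReal_expect_sum_pairs_ge_le {Γ κ ι : Type*} [Fintype Γ] [Nonempty Γ] [Fintype κ]
    {X : ι → Ω → E} (hX : iIndepFun X μ) (c : Γ → κ ⊕ κ ↪ ι) {P Q : Measure E}
    (hP : ∀ g k, HasLaw (X (c g (.inl k))) P μ) (hQ : ∀ g k, HasLaw (X (c g (.inr k))) Q μ)
    {f : E × E → ℝ} (hf : Measurable f) (hL2 : MemLp f 2 (P.prod Q)) (hf1 : ∀ z, f z ≤ 1)
    {ν s : ℝ} (hsq : ∫ z, f z ^ 2 ∂P.prod Q ≤ ν) (hν : 0 < ν) (hs0 : 0 ≤ s) (hs : s ≤ 3 * ν) :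
    μ.real {ω | Fintype.card κ * (∫ z, f z ∂P.prod Q + s) ≤
        𝔼 g, ∑ k, f (X (c g (.inl k)) ω, X (c g (.inr k)) ω)} ≤
      exp (-(Fintype.card κ * s ^ 2 / (4 * ν))) := by
  have := hX.isProbabilityMeasure
  have hmeas (g : Γ) : ∀ i, AEMeasurable (X (c g i)) μ := by
    rintro (k | k)
    exacts [(hP g k).aemeasurable, (hQ g k).aemeasurable]
  have hpair (g : Γ) (k : κ) :
      HasLaw (fun ω ↦ (X (c g (.inl k)) ω, X (c g (.inr k)) ω)) (P.prod Q) μ := by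
    have := (hP g k).isProbabilityMeasure_iff.1 ‹_›
    have := (hQ g k).isProbabilityMeasure_iff.1 ‹_›
    exact (hX.indepFun ((c g).injective.ne Sum.inl_ne_inr)).hasLaw_prod (hP g k) (hQ g k)
  refine measureReal_expect_sum_ge_le
    (Z := fun g k ω ↦ f (X (c g (.inl k)) ω, X (c g (.inr k)) ω)) (fun g ↦ ?_) (fun g k ↦ ?_)
    (fun g k ↦ .of_forall fun ω ↦ hf1 _) (fun g k ↦ ?_) (fun g k ↦ ?_) hν hs0 hs
  · exact (iIndepFun_prodMk_inl_inr (hmeas g) (hX.precomp (c g).injective)).comp _ fun _ ↦ hf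
  · exact MemLp.comp_of_map (by rwa [(hpair g k).map_eq]) (hpair g k).aemeasurable
  · exact ((hpair g k).integral_comp hf.aestronglyMeasurable).le
  · exact ((hpair g k).integral_comp (f := fun z ↦ f z ^ 2) (by fun_prop)).trans_le hsq

variable {α β : Type*} [Fintype α] [Fintype β] {P Q : Measure E} {f : E × E → ℝ} {ν r s : ℝ}

theorem measureReal_uStat_ge_le {X : α → Ω → E} (hX : iIndepFun X μ)
    (hP : ∀ i, HasLaw (X i) P μ) (hr : r + 1 ≤ Fintype.card α) (hf : Measurable f)
    (hL2 : MemLp f 2 (P.prod P)) (hf1 : ∀ z, f z ≤ 1) (hsq : ∫ z, f z ^ 2 ∂P.prod P ≤ ν)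
    (hν : 0 < ν) (hs0 : 0 ≤ s) (hs : s ≤ 3 * ν) :
    μ.real {ω | ∫ z, f z ∂P.prod P + s ≤ uStat f (fun i ↦ X i ω)} ≤
      exp (-(r * s ^ 2 / (8 * ν))) := by
  classical
  set m := Fintype.card α / 2
  obtain ⟨e⟩ : Nonempty (Fin m ⊕ Fin m ↪ α) :=
    Embedding.nonempty_of_card_le (by simp only [Fintype.card_sum, Fintype.card_fin]; omega)
  have hpair := measureReal_expect_sum_pairs_ge_le hX (fun σ : Equiv.Perm α ↦ e.trans σ)
    (fun _ _ ↦ hP _) (fun _ _ ↦ hP _) hf hL2 hf1 hsq hν hs0 hs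
  have expect_eq (ω : Ω) : 𝔼 σ : Equiv.Perm α, ∑ k,
      f (X (σ (e (.inl k))) ω, X (σ (e (.inr k))) ω) =
        m * uStat f (fun i ↦ X i ω) := by
    rw [Finset.expect_sum_comm]
    simp [expect_perm_eq_uStat f (fun i ↦ X i ω) (e.injective.ne Sum.inl_ne_inr)]
  simp only [Embedding.trans_apply, Equiv.coe_toEmbedding, expect_eq, Fintype.card_fin] at hpair
  have := hX.isProbabilityMeasure
  have card_le : (Fintype.card α : ℝ) ≤ 2 * m + 1 := by
    exact_mod_cast (by omega : Fintype.card α ≤ 2 * m + 1)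
  calc _ ≤ exp (-(m * s ^ 2 / (4 * ν))) := by
        refine (measureReal_mono (Set.ofPred_subset_ofPred.2 fun ω hω ↦ ?_)).trans hpair
        exact mul_le_mul_of_nonneg_left hω m.cast_nonneg
    _ = exp (-(2 * m * s ^ 2 / (8 * ν))) := by congr 2; field_simp; ring
    _ ≤ exp (-(r * s ^ 2 / (8 * ν))) := by gcongr; linarith

lemma measureReal_uStat_le_le {X : α → Ω → E} (hX : iIndepFun X μ)
    (hP : ∀ i, HasLaw (X i) P μ) (hr : r + 1 ≤ Fintype.card α) (hf : Measurable f)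
    (hL2 : MemLp f 2 (P.prod P)) (hf1 : ∀ z, -1 ≤ f z) (hsq : ∫ z, f z ^ 2 ∂P.prod P ≤ ν)
    (hν : 0 < ν) (hs0 : 0 ≤ s) (hs : s ≤ 3 * ν) :
    μ.real {ω | uStat f (fun i ↦ X i ω) ≤ ∫ z, f z ∂P.prod P - s} ≤
      exp (-(r * s ^ 2 / (8 * ν))) := by
  have hneg := measureReal_uStat_ge_le hX hP hr hf.neg hL2.neg (fun z ↦ neg_le.1 (hf1 z))
    (by simpa using hsq) hν hs0 hs
  simpa only [Pi.neg_apply, integral_neg, uStat_neg, neg_add_le_iff_le_add, ← sub_eq_add_neg,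
    le_sub_iff_add_le, le_neg, neg_add', neg_neg] using hneg

theorem measureReal_expect_expect_ge_le {X : α ⊕ β → Ω → E} (hX : iIndepFun X μ)
    (hP : ∀ i, HasLaw (X (.inl i)) P μ) (hQ : ∀ j, HasLaw (X (.inr j)) Q μ)
    (hrα : r ≤ Fintype.card α) (hrβ : r ≤ Fintype.card β)
    (hf : Measurable f) (hL2 : MemLp f 2 (P.prod Q)) (hf1 : ∀ z, f z ≤ 1)
    (hsq : ∫ z, f z ^ 2 ∂P.prod Q ≤ ν) (hν : 0 < ν) (hs0 : 0 ≤ s) (hs : s ≤ 3 * ν) :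
    μ.real {ω | ∫ z, f z ∂P.prod Q + s ≤ 𝔼 i, 𝔼 j, f (X (.inl i) ω, X (.inr j) ω)} ≤
      exp (-(r * s ^ 2 / (4 * ν))) := by
  classical
  set m := min (Fintype.card α) (Fintype.card β) with hm
  obtain ⟨a⟩ : Nonempty (Fin m ↪ α) := Embedding.nonempty_of_card_le (by simp [hm])
  obtain ⟨b⟩ : Nonempty (Fin m ↪ β) := Embedding.nonempty_of_card_le (by simp [hm])
  have hpair := measureReal_expect_sum_pairs_ge_le hX
    (fun στ : Equiv.Perm α × Equiv.Perm β ↦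
      (a.trans στ.1.toEmbedding).sumMap (b.trans στ.2.toEmbedding))
    (fun _ _ ↦ hP _) (fun _ _ ↦ hQ _) hf hL2 hf1 hsq hν hs0 hs
  have expect_eq (ω : Ω) : 𝔼 στ : Equiv.Perm α × Equiv.Perm β, ∑ k,
      f (X (.inl (στ.1 (a k))) ω, X (.inr (στ.2 (b k))) ω) =
        m * 𝔼 i, 𝔼 j, f (X (.inl i) ω, X (.inr j) ω) := by
    rw [Finset.expect_sum_comm]
    simp [expect_prod_perm_eq_expect_expect f (fun i ↦ X (.inl i) ω) (fun j ↦ X (.inr j) ω)]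
  simp only [Embedding.coe_sumMap, Sum.map_inl, Sum.map_inr, Embedding.trans_apply,
    Equiv.coe_toEmbedding, expect_eq, Fintype.card_fin] at hpair
  have := hX.isProbabilityMeasure
  have le_m : r ≤ m := by
    rw [hm, Nat.cast_min]
    exact le_min hrα hrβ
  calc _ ≤ exp (-(m * s ^ 2 / (4 * ν))) := by
        refine (measureReal_mono (Set.ofPred_subset_ofPred.2 fun ω hω ↦ ?_)).trans hpair
        exact mul_le_mul_of_nonneg_left hω m.cast_nonneg
    _ ≤ exp (-(r * s ^ 2 / (4 * ν))) := by gcongr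

end Sampling

section MMD

lemma mmdStat_eq_expect {E : Type*} (K : E → E → ℝ) (nX nY : ℕ)
    (ω : (Fin nX → E) × (Fin nY → E)) :
    mmdStat K nX nY ω = 𝔼 i, 𝔼 j, K (ω.1 i) (ω.1 j) + 𝔼 i, 𝔼 j, K (ω.2 i) (ω.2 j) -
      2 * 𝔼 i, 𝔼 j, K (ω.1 i) (ω.2 j) := by
  simp only [mmdStat, Fintype.expect_eq_sum_div_card, Fintype.card_fin, ← Finset.sum_div]
  ring

lemma uStat_add_uStat_sub_le_mmdStat {E : Type*} {K : E → E → ℝ}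
    (hK : ∀ x y, K x y + K y x ≤ K x x + K y y) {nX nY : ℕ} [Nontrivial (Fin nX)]
    [Nontrivial (Fin nY)] (ω : (Fin nX → E) × (Fin nY → E)) :
    uStat (uncurry K) ω.1 + uStat (uncurry K) ω.2 - 2 * 𝔼 i, 𝔼 j, K (ω.1 i) (ω.2 j) ≤
      mmdStat K nX nY ω := by
  rw [mmdStat_eq_expect]
  gcongr
  exacts [uStat_le_expect_expect hK ω.1, uStat_le_expect_expect hK ω.2]

variable {E : Type*} [MeasurableSpace E] {K : E → E → ℝ} {P Q : Measure E}

lemma deltaK_eq_integral_prod [SFinite P] [SFinite Q]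
    (hPP : Integrable (uncurry K) (P.prod P)) (hPQ : Integrable (uncurry K) (P.prod Q))
    (hQQ : Integrable (uncurry K) (Q.prod Q)) :
    deltaK K P Q = ∫ z, uncurry K z ∂P.prod P - 2 * ∫ z, uncurry K z ∂P.prod Q +
      ∫ z, uncurry K z ∂Q.prod Q := by
  rw [deltaK, integral_prod _ hPP, integral_prod _ hPQ, integral_prod _ hQQ]
  rfl

lemma sq_integral_le_integral_sq {Ω : Type*} [MeasurableSpace Ω] {μ : Measure Ω}
    [IsProbabilityMeasure μ] {X : Ω → ℝ} (hX : MemLp X 2 μ) : μ[X] ^ 2 ≤ μ[X ^ 2] :=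
  sub_nonneg.1 (variance_eq_sub hX ▸ variance_nonneg X μ)

lemma iIndepFun_sumElim_prod_pi {α β : Type*} [Fintype α] [Fintype β] (P : α → Measure E)
    (Q : β → Measure E) [∀ i, IsProbabilityMeasure (P i)] [∀ j, IsProbabilityMeasure (Q j)] :
    iIndepFun (Sum.elim (fun i ω ↦ ω.1 i) fun j ω ↦ ω.2 j)
      ((Measure.pi P).prod (Measure.pi Q)) := by
  have (i : α ⊕ β) : IsProbabilityMeasure (Sum.elim P Q i) := by
    cases i <;> simp only [Sum.elim_inl, Sum.elim_inr] <;> infer_instance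
  have hpi : MeasurePreserving (MeasurableEquiv.sumPiEquivProdPi fun _ : α ⊕ β ↦ E).symm
      ((Measure.pi P).prod (Measure.pi Q)) (Measure.pi (Sum.elim P Q)) :=
    measurePreserving_sumPiEquivProdPi_symm (Sum.elim P Q)
  have hsymm : Sum.elim (fun i ω ↦ ω.1 i) (fun j ω ↦ ω.2 j) =
      fun i ω ↦ (MeasurableEquiv.sumPiEquivProdPi fun _ : α ⊕ β ↦ E).symm ω i := by
    funext i ω
    cases i <;> rfl
  have hcoord (i : α ⊕ β) :
      HasLaw (fun ω ↦ (MeasurableEquiv.sumPiEquivProdPi fun _ : α ⊕ β ↦ E).symm ω i)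
        (Sum.elim P Q i) ((Measure.pi P).prod (Measure.pi Q)) :=
    (measurePreserving_eval _ i).fun_comp_hasLaw hpi.hasLaw
  rw [hsymm, iIndepFun_iff_hasLaw_pi_pi hcoord]
  exact hpi.hasLaw

lemma memLp_uncurry (hKmeas : Measurable (uncurry K)) (hKbdd : ∀ x y, |K x y| ≤ 1)
    (μ : Measure (E × E)) [IsFiniteMeasure μ] : MemLp (uncurry K) 2 μ :=
  .of_bound hKmeas.aestronglyMeasurable 1 (.of_forall fun z ↦ hKbdd z.1 z.2)

lemma le_or_le_or_le_of_mmdStat_le [IsFiniteMeasure P] [IsFiniteMeasure Q]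
    (hKmeas : Measurable (uncurry K)) (hKbdd : ∀ x y, |K x y| ≤ 1)
    (hKdiag : ∀ x y, K x y + K y x ≤ K x x + K y y) {nX nY : ℕ} [Nontrivial (Fin nX)]
    [Nontrivial (Fin nY)] {ω : (Fin nX → E) × (Fin nY → E)} {s : ℝ}
    (hω : mmdStat K nX nY ω ≤ deltaK K P Q - 4 * s) :
    uStat (uncurry K) ω.1 ≤ ∫ z, uncurry K z ∂P.prod P - s ∨
      uStat (uncurry K) ω.2 ≤ ∫ z, uncurry K z ∂Q.prod Q - s ∨
        ∫ z, uncurry K z ∂P.prod Q + s ≤ 𝔼 i, 𝔼 j, K (ω.1 i) (ω.2 j) := by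
  have hint (μ : Measure (E × E)) [IsFiniteMeasure μ] : Integrable (uncurry K) μ :=
    (memLp_uncurry hKmeas hKbdd μ).integrable one_le_two
  have hlow := (uStat_add_uStat_sub_le_mmdStat hKdiag ω).trans hω
  rw [deltaK_eq_integral_prod (hint _) (hint _) (hint _)] at hlow
  by_contra! hcon
  linarith

variable {Ω : Type*} [MeasurableSpace Ω] {μ : Measure Ω} {nX nY : ℕ} {ν r s : ℝ}

theorem measureReal_mmdStat_le_deltaK_sub_le {X : Fin nX ⊕ Fin nY → Ω → E} (hX : iIndepFun X μ)
    (hP : ∀ i, HasLaw (X (.inl i)) P μ) (hQ : ∀ j, HasLaw (X (.inr j)) Q μ)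
    (hKmeas : Measurable (uncurry K)) (hKdiag : ∀ x y, K x y + K y x ≤ K x x + K y y)
    (hKbdd : ∀ x y, |K x y| ≤ 1) (hPP : ∫ z, uncurry K z ^ 2 ∂P.prod P ≤ ν)
    (hPQ : ∫ z, uncurry K z ^ 2 ∂P.prod Q ≤ ν) (hQQ : ∫ z, uncurry K z ^ 2 ∂Q.prod Q ≤ ν)
    (hν : 0 < ν) (hr : 0 < r) (hrX : r + 1 ≤ nX) (hrY : r + 1 ≤ nY) (hs0 : 0 ≤ s)
    (hs : s ≤ 3 * ν) :
    μ.real {ω | mmdStat K nX nY (fun i ↦ X (.inl i) ω, fun j ↦ X (.inr j) ω) ≤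
        deltaK K P Q - 4 * s} ≤ 3 * exp (-(r * s ^ 2 / (8 * ν))) := by
  have nontrivial_fin {n : ℕ} (hn : r + 1 ≤ n) : Nontrivial (Fin n) :=
    Fin.nontrivial_iff_two_le.2 (by exact_mod_cast (by linarith : (1 : ℝ) < n))
  have := nontrivial_fin hrX
  have := nontrivial_fin hrY
  have := hX.isProbabilityMeasure
  have := (hP (Classical.arbitrary _)).isProbabilityMeasure_iff.1 ‹_›
  have := (hQ (Classical.arbitrary _)).isProbabilityMeasure_iff.1 ‹_›
  have hL2 := memLp_uncurry hKmeas hKbdd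
  have hK1 (z : E × E) : uncurry K z ≤ 1 := (abs_le.1 (hKbdd z.1 z.2)).2
  have hK1' (z : E × E) : -1 ≤ uncurry K z := (abs_le.1 (hKbdd z.1 z.2)).1
  have tail_X := measureReal_uStat_le_le (X := fun i ↦ X (.inl i))
    (hX.precomp Sum.inl_injective) hP (by rwa [Fintype.card_fin]) hKmeas (hL2 _) hK1' hPP hν hs0 hs
  have tail_Y := measureReal_uStat_le_le (X := fun j ↦ X (.inr j))
    (hX.precomp Sum.inr_injective) hQ (by rwa [Fintype.card_fin]) hKmeas (hL2 _) hK1' hQQ hν hs0 hs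
  have tail_XY := (measureReal_expect_expect_ge_le hX hP hQ (r := r)
    (by rw [Fintype.card_fin]; linarith) (by rw [Fintype.card_fin]; linarith)
    hKmeas (hL2 _) hK1 hPQ hν hs0 hs).trans
      (by gcongr; norm_num : _ ≤ exp (-(r * s ^ 2 / (8 * ν))))
  have hsub := measureReal_mono (μ := μ) fun ω ↦ le_or_le_or_le_of_mmdStat_le hKmeas hKbdd hKdiag
    (P := P) (Q := Q) (ω := (fun i ↦ X (.inl i) ω, fun j ↦ X (.inr j) ω)) (s := s)
  calc _ ≤ _ := hsub
    _ ≤ _ := (measureReal_union_le _ _).trans (add_le_add_right (measureReal_union_le _ _) _)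
    _ ≤ exp (-(r * s ^ 2 / (8 * ν))) +
          (exp (-(r * s ^ 2 / (8 * ν))) + exp (-(r * s ^ 2 / (8 * ν)))) :=
        add_le_add tail_X (add_le_add tail_Y tail_XY)
    _ = 3 * exp (-(r * s ^ 2 / (8 * ν))) := by ring

lemma pos_of_deltaK_pos [IsProbabilityMeasure P] [IsProbabilityMeasure Q]
    (hKmeas : Measurable (uncurry K)) (hKbdd : ∀ x y, |K x y| ≤ 1)
    (hPP : ∫ z, uncurry K z ^ 2 ∂P.prod P ≤ ν) (hPQ : ∫ z, uncurry K z ^ 2 ∂P.prod Q ≤ ν)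
    (hQQ : ∫ z, uncurry K z ^ 2 ∂Q.prod Q ≤ ν) (hδ : 0 < deltaK K P Q) : 0 < ν := by
  have hL2 := memLp_uncurry hKmeas hKbdd
  by_contra! hν
  have integral_eq_zero (μ : Measure (E × E)) [IsProbabilityMeasure μ]
      (hμ : ∫ z, uncurry K z ^ 2 ∂μ ≤ ν) : ∫ z, uncurry K z ∂μ = 0 :=
    pow_eq_zero_iff two_ne_zero |>.1 <|
      ((sq_integral_le_integral_sq (hL2 μ)).trans (hμ.trans hν)).antisymm (sq_nonneg _)
  have hint (μ : Measure (E × E)) [IsFiniteMeasure μ] : Integrable (uncurry K) μ :=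
    (hL2 μ).integrable one_le_two
  rw [deltaK_eq_integral_prod (hint _) (hint _) (hint _), integral_eq_zero _ hPP,
    integral_eq_zero _ hPQ, integral_eq_zero _ hQQ] at hδ
  simp at hδ

lemma integral_integral_sq_eq_integral_prod [IsFiniteMeasure P] [IsFiniteMeasure Q]
    (hKmeas : Measurable (uncurry K)) (hKbdd : ∀ x y, |K x y| ≤ 1) :
    ∫ x, ∫ y, K x y ^ 2 ∂Q ∂P = ∫ z, uncurry K z ^ 2 ∂P.prod Q :=
  (integral_prod _ (memLp_uncurry hKmeas hKbdd _).integrable_sq).symm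

lemma mul_sqrt_div_le_of_sq_div_le {a b : ℝ} (hν : 0 ≤ ν) (hr : 0 < r) (hb : 0 < b)
    (h : ν / b ^ 2 * a ^ 2 ≤ r) : a * √(ν / r) ≤ b := by
  refine (abs_le_of_sq_le_sq' ?_ hb.le).2
  rw [mul_pow, sq_sqrt (by positivity), mul_div_assoc', div_le_iff₀ hr]
  rw [div_mul_eq_mul_div, div_le_iff₀ (by positivity)] at h
  linarith

lemma threshold_le_sub {δ lam₁ lam₂ : ℝ} (hν : 0 ≤ ν) (hr : 0 < r) (hδ : 0 < δ)
    (hrδ : 8 / δ ≤ r) (hrlam : ν / δ ^ 2 * (8 * (lam₁ + lam₂)) ^ 2 ≤ r) :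
    4 / r + 4 * lam₁ * √(ν / r) ≤ δ - 4 * (lam₂ * √(ν / r)) := by
  have bias_le : 4 / r ≤ δ / 2 := by
    rw [div_le_iff₀ hδ] at hrδ
    rw [div_le_iff₀ hr]
    linarith
  have fluctuation_le : 8 * (lam₁ + lam₂) * √(ν / r) ≤ δ :=
    mul_sqrt_div_le_of_sq_div_le hν hr hδ hrlam
  linarith

lemma add_swap_le_add_diag_of_psd {E : Type*} {K : E → E → ℝ}
    (hK : ∀ (m : ℕ) (z : Fin m → E) (a : Fin m → ℝ),
      0 ≤ ∑ i, ∑ j, a i * a j * K (z i) (z j)) (x y : E) :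
    K x y + K y x ≤ K x x + K y y := by
  have := hK 2 ![x, y] ![1, -1]
  simp only [Fin.sum_univ_two, Matrix.cons_val_zero, Matrix.cons_val_one] at this
  linarith

theorem mmd_test_power_general [IsProbabilityMeasure P] [IsProbabilityMeasure Q]
    (hKmeas : Measurable (uncurry K)) (hKdiag : ∀ x y, K x y + K y x ≤ K x x + K y y)
    (hKbdd : ∀ x y, |K x y| ≤ 1) (hPP : ∫ x, ∫ y, K x y ^ 2 ∂P ∂P ≤ ν)
    (hPQ : ∫ x, ∫ y, K x y ^ 2 ∂Q ∂P ≤ ν) (hQQ : ∫ x, ∫ y, K x y ^ 2 ∂Q ∂Q ≤ ν)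
    (hrX : r + 1 ≤ nX) (hrY : r + 1 ≤ nY) (hδ : 0 < deltaK K P Q) {lam₁ lam₂ : ℝ}
    (hlam₂ : 0 ≤ lam₂)
    (hr : max (lam₂ ^ 2 / (9 * ν)) (max (8 / deltaK K P Q)
      (ν / deltaK K P Q ^ 2 * (8 * (lam₁ + lam₂)) ^ 2)) ≤ r) :
    ((Measure.pi fun _ : Fin nX ↦ P).prod (Measure.pi fun _ : Fin nY ↦ Q))
        {ω | mmdStat K nX nY ω ≤ 4 / r + 4 * lam₁ * √(ν / r)} ≤
      ENNReal.ofReal (3 * exp (-lam₂ ^ 2 / 8)) := by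
  rw [integral_integral_sq_eq_integral_prod hKmeas hKbdd] at hPP hPQ hQQ
  have hν : 0 < ν := pos_of_deltaK_pos hKmeas hKbdd hPP hPQ hQQ hδ
  obtain ⟨hrν, hrδ, hrlam⟩ : _ ∧ _ ∧ _ := by simpa only [max_le_iff] using hr
  have hr0 : 0 < r := hrδ.trans_lt' (by positivity)
  have deviation_le : lam₂ * √(ν / r) ≤ 3 * ν :=
    mul_sqrt_div_le_of_sq_div_le hν.le hr0 (by positivity) (hrν.trans_eq' (by field_simp; norm_num))
  have threshold_le :=
    threshold_le_sub (lam₁ := lam₁) (lam₂ := lam₂) hν.le hr0 hδ hrδ hrlam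
  have hexp : r * (lam₂ * √(ν / r)) ^ 2 / (8 * ν) = lam₂ ^ 2 / 8 := by
    rw [mul_pow, sq_sqrt (by positivity)]
    field_simp
  have tail := measureReal_mmdStat_le_deltaK_sub_le
    (iIndepFun_sumElim_prod_pi (fun _ : Fin nX ↦ P) fun _ : Fin nY ↦ Q)
    (fun i ↦ (measurePreserving_eval (fun _ ↦ P) i).fun_comp_hasLaw measurePreserving_fst.hasLaw)
    (fun j ↦ (measurePreserving_eval (fun _ ↦ Q) j).fun_comp_hasLaw measurePreserving_snd.hasLaw)
    hKmeas hKdiag hKbdd hPP hPQ hQQ hν hr0 hrX hrY (by positivity) deviation_le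
  rw [hexp, ← neg_div] at tail
  refine (ENNReal.le_ofReal_iff_toReal_le (measure_ne_top _ _) (by positivity)).2 <|
    (measureReal_mono (Set.ofPred_subset_ofPred.2 fun ω hω ↦ ?_)).trans tail
  exact hω.trans threshold_le

end MMD

/-- Theorem 3.1, power part: under `H₁ : p ≠ q` with `δ_K > 0`, with threshold
`t_thres = 4/(cn) + 4λ₁√(ν/(cn))`, `λ₁ = √(8 log(4/α))`, if
`n > (1/c)·max{max{λ₁,λ₂}²/(9ν), 8/δ_K, (ν/δ_K²)(8(λ₁+λ₂))²}` then
`Pr[T̂ ≤ t_thres] ≤ 3 e^{−λ₂²/8}`. -/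
theorem mmd_test_power
    {d : ℕ} (𝒳 : Set (EuclideanSpace ℝ (Fin d))) (h𝒳 : MeasurableSet 𝒳)
    (K : 𝒳 → 𝒳 → ℝ)
    (hKmeas : Measurable (Function.uncurry K))
    (hKsym : ∀ x y, K x y = K y x)
    (hKpsd : ∀ (m : ℕ) (z : Fin m → 𝒳) (a : Fin m → ℝ),
      0 ≤ ∑ i, ∑ j, a i * a j * K (z i) (z j))
    (hKbdd : ∀ x y, |K x y| ≤ 1)
    (p q : Measure 𝒳) [IsProbabilityMeasure p] [IsProbabilityMeasure q]
    (ν : ℝ) (hν1 : ν ≤ 1)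
    (hνpp : ∫ x, ∫ y, (K x y)^2 ∂p ∂p ≤ ν)
    (hνpq : ∫ x, ∫ y, (K x y)^2 ∂q ∂p ≤ ν)
    (hνqq : ∫ x, ∫ y, (K x y)^2 ∂q ∂q ≤ ν)
    (nX nY : ℕ) (c : ℝ) (hc : 0 < c) (hc1 : c < 1)
    (hbalX : c * ((nX + nY : ℕ) : ℝ) + 1 ≤ (nX : ℝ))
    (hbalY : c * ((nX + nY : ℕ) : ℝ) + 1 ≤ (nY : ℝ))
    (hH1 : p ≠ q) (hδ : 0 < deltaK K p q)
    (α : ℝ) (hα : 0 < α) (hα1 : α < 1)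
    (lam₂ : ℝ) (hlam₂ : 0 < lam₂)
    (hn : ((nX + nY : ℕ) : ℝ) > (1/c) * max
        ((max (Real.sqrt (8 * Real.log (4/α))) lam₂)^2 / (9 * ν))
        (max (8 / deltaK K p q)
          ((ν / (deltaK K p q)^2) * (8 * (Real.sqrt (8 * Real.log (4/α)) + lam₂))^2))) :
    ((Measure.pi fun _ : Fin nX => p).prod (Measure.pi fun _ : Fin nY => q))
      {ω : (Fin nX → 𝒳) × (Fin nY → 𝒳) |
        mmdStat K nX nY ω ≤
          4/(c * ((nX + nY : ℕ) : ℝ))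
          + 4 * Real.sqrt (8 * Real.log (4/α))
              * Real.sqrt (ν/(c * ((nX + nY : ℕ) : ℝ)))}
      ≤ ENNReal.ofReal (3 * Real.exp (-lam₂^2 / 8)) := by
  have hν : 0 ≤ ν := hνpp.trans' (integral_nonneg fun _ ↦ integral_nonneg fun _ ↦ sq_nonneg _)
  rw [gt_iff_lt, one_div_mul_eq_div, div_lt_iff₀' hc] at hn
  refine mmd_test_power_general hKmeas (add_swap_le_add_diag_of_psd hKpsd) hKbdd hνpp hνpq hνqq
    hbalX hbalY hδ hlam₂.le (hn.le.trans' (max_le_max_right _ ?_))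
  gcongr
  exact le_max_right _ _
end
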